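/- Let c > 1 and let θ be a smooth admissible function with respect to c and α = 1 with Fourier coefficients (c_k)_{k∈ℤ} and c̃ = 2π/log c, and let φ₁ be the measure on (0,∞) with φ₁((r,∞)) = r^{−1} θ(log r) for all r > 0. Let f ∈ L¹(ℝ) be bounded and differentiable with f′(y) = O(|y|^{−β}) for some β > 0 as y → −∞, such that f″ and f‴ exist and f‴ ∈ L¹(ℝ). Then for almost every x ∈ ℝ, the positive Zolotarev semi-fractional derivative satisfies ∫₀^∞ (f(x−y) − f(x) + f′(x) sin y) dφ₁(y) = lim_{h ↓ 0} ( ¹ₕΔ_{c,θ} f(x) + ²ₕΔ_{c,θ} f(x) ). -/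

import Mathlib

open MeasureTheory Real Filter Set Complex

noncomputable section

def IsAdmissible (c α : ℝ) (θ : ℝ → ℝ) : Prop :=
  (∀ x, 0 < θ x) ∧
  Function.Periodic θ (Real.log (c ^ (1 / α))) ∧
  ∀ y δ : ℝ, 0 ≤ δ → θ (y + δ) ≤ Real.exp (α * δ) * θ y

def IsSmoothAdmissible (c α : ℝ) (θ : ℝ → ℝ) (cfs : ℤ → ℂ) : Prop :=
  IsAdmissible c α θ ∧ Continuous θ ∧
  (∀ k : ℤ, cfs (-k) = starRingEnd ℂ (cfs k)) ∧
  (∃ C > 0, ∀ k : ℤ, k ≠ 0 → ‖cfs k‖ ≤ C / (k : ℝ) ^ 2) ∧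
  Summable (fun k : ℤ => ‖cfs k‖) ∧
  ∀ x : ℝ, HasSum
    (fun k : ℤ => cfs k * Complex.exp (Complex.I * (k : ℂ) * ((2 * Real.pi * α / Real.log c : ℝ) : ℂ) * (x : ℂ)))
    ((θ x : ℂ))

/-- Generalized binomial coefficient `C(z,j) = z(z-1)⋯(z-j+1)/j!`. -/
def gbinom (z : ℂ) (j : ℕ) : ℂ := (∏ i ∈ Finset.range j, (z - (i : ℂ))) / (j.factorial : ℂ)

/-!
Write `s_k = i k c̃`, so that `θ (log y) = ∑ c_k y^{s_k}`.

*Discrete side.* For `k ≠ 0` the identity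
`Γ(s) C(1 - s, j) (-1)^j = Γ(s + j) / j! - Γ(s + j - 1) / (j - 1)!` and summation by parts turn the
difference of order `1 - s_k` into the series of difference quotients
`D j = (f (x - j h) - f (x - (j + 1) h)) / h` with weights `h^{s_k} Γ(s_k + j) / j!`
(`Gamma_mul_tsum_gbinom`). For `j ≥ 1` these weights are Mellin transforms of Poisson weights,
`h^s Γ(s + j) / j! = ∫ y^{s-1} e^{-y/h} (y/h)^j / j! dy` (`integral_cpow_mul_pois`). Hence the sum over
`k` can be carried out under the integral sign (`hasSum_difference`), and the difference operators
become `∫ θ (log y) / y * Rker D h y dy`, where `Rker D h y` is `D 0 e^{-y}` minus the average of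
`D` over the Poisson distribution with mean `y / h`. The mode `k = 0` has the weights `1 / j`. It is
absent from the first operator and supplied by the second one, up to
`c_0 f' x (H_⌊1/h⌋ - log (1/h) - γ_E)`, which tends to `0`, and up to the replacement of difference
quotients by derivatives (`tendsto_quotient_error`).

*Limit.* As `h → 0` the Poisson distribution with mean `y / h`, rescaled by `h`, concentrates at `y`, so
`Rker D h y` tends to `f' x e^{-y} - f' (x - y)` (`tendsto_Rker`). The kernel is `O(y)` near `0`
and `O(y^{-β})` at infinity, uniformly in `h`; dominated convergence gives
`tendsto_integral_Rker`.

*Measure side.* Since `φ₁` has the tail `θ (log r) / r`, Fubini gives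
`∫ F dφ₁ = ∫ θ (log y) / y * F' y dy` whenever `F 0 = 0` (`integral_layer`). Applied to
`F y = f (x - y) - f x + f' x (1 - e^{-y})` this is the limit above. The remaining part
`f' x ∫ (sin y - (1 - e^{-y})) dφ₁` is evaluated by replacing `cos y` with `e^{-ε y} cos y`,
integrating the Fourier series termwise and letting `ε → 0` (`hasSum_compensator`). Its coefficients
`c_k Γ(s_k) (cos (π s_k / 2) - 1)` contain the weights of `f' x` in the first operator; the term `-1`
cancels the one produced by the `e^{-y}` in `Rker`. All interchanges rest on the absolute
convergence of `∑ c_k` and on the bound for `Γ` on the imaginary axis (`exists_Vk_bound`).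

The formula holds at every point `x`.
-/

/-! ### Poisson weights and averages -/

lemma hasSum_congr' {ι E : Type*} [NormedAddCommGroup E] {f g : ι → E} {a b : E} (h : HasSum f a) (hf : ∀ j, g j = f j)
    (hab : b = a) : HasSum g b := by
  rw [hab, funext hf]; exact h

/-- The Poisson weight `e^{-l} l^j / j!`. -/
def pois (l : ℝ) (j : ℕ) : ℝ := Real.exp (-l) * (l ^ j / (j.factorial : ℝ))

lemma pois_nonneg {l : ℝ} (hl : 0 ≤ l) (j : ℕ) : 0 ≤ pois l j := by
  unfold pois; positivity

lemma pois_succ (l : ℝ) (j : ℕ) : ((j : ℝ) + 1) * pois l (j + 1) = l * pois l j := by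
  unfold pois
  rw [Nat.factorial_succ]; push_cast
  have : (j.factorial : ℝ) ≠ 0 := by positivity
  field_simp
  ring

lemma hasSum_pois (l : ℝ) : HasSum (pois l) 1 := by
  have h := (NormedSpace.expSeries_div_hasSum_exp l).mul_left (Real.exp (-l))
  rw [← Real.exp_eq_exp_ℝ, ← Real.exp_add] at h
  exact hasSum_congr' h (fun j => rfl) (by simp)

lemma hasSum_pois_one (l : ℝ) : HasSum (fun j : ℕ => (j : ℝ) * pois l j) l := by
  rw [← hasSum_nat_add_iff' 1]
  simpa [pois_succ] using (hasSum_pois l).mul_left l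

lemma hasSum_pois_two (l : ℝ) : HasSum (fun j : ℕ => (j : ℝ) ^ 2 * pois l j) (l ^ 2 + l) := by
  rw [← hasSum_nat_add_iff' 1]
  have h := ((hasSum_pois_one l).add (hasSum_pois l)).mul_left l
  have e : ∀ j : ℕ, ((j : ℝ) + 1) ^ 2 * pois l (j + 1) = l * ((j : ℝ) * pois l j + pois l j) := by
    intro j
    rw [pow_two, mul_assoc, pois_succ]; ring
  simp only [Nat.cast_add, Nat.cast_one, e]
  exact hasSum_congr' h (fun j => rfl) (by simp; ring)

lemma hasSum_pois_inv {l : ℝ} (hl : 0 < l) :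
    HasSum (fun j : ℕ => (1 / ((j : ℝ) + 1)) * pois l j) ((1 - Real.exp (-l)) / l) := by
  have h := (hasSum_nat_add_iff' 1).2 (hasSum_pois l)
  have h2 := h.mul_left (1 / l)
  have e : ∀ j : ℕ, 1 / ((j : ℝ) + 1) * pois l j = 1 / l * pois l (j + 1) := by
    intro j
    have := pois_succ l j
    field_simp
    linarith
  simp only [e]
  exact hasSum_congr' h2 (fun j => rfl) (by simp [pois]; ring)

/-- `D 0 * exp (-y)` minus the average of `D` over the Poisson distribution with mean `y / h`.
Here `D j` plays the role of a difference quotient at distance `j * h`, so that the average is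
close to the value of `D` at distance `y`. -/
def Rker (D : ℕ → ℝ) (h y : ℝ) : ℝ := D 0 * Real.exp (-y) - ∑' j, pois (y / h) j * D j

lemma summable_pois_mul {D : ℕ → ℝ} {C l : ℝ} (hl : 0 ≤ l) (hD : ∀ j, |D j| ≤ C) :
    Summable (fun j => pois l j * D j) := by
  refine Summable.of_norm_bounded ((hasSum_pois l).summable.mul_right C) fun j => ?_
  rw [norm_mul, Real.norm_eq_abs, Real.norm_eq_abs, abs_of_nonneg (pois_nonneg hl j)]
  exact mul_le_mul_of_nonneg_left (hD j) (pois_nonneg hl j)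

lemma measurable_Rker (D : ℕ → ℝ) (h : ℝ) : Measurable (Rker D h) := by
  unfold Rker pois
  refine Measurable.sub (by fun_prop) (Measurable.tsum fun j => ?_)
  fun_prop

/-- Comparison of the Poisson average of `D` with the value `v`, when the distance of `D j` to `v`
is controlled by an arbitrary summable majorant. -/
lemma abs_tsum_pois_sub_le {D E : ℕ → ℝ} {C l v s : ℝ} (hl : 0 ≤ l) (hD : ∀ j, |D j| ≤ C)
    (hE : ∀ j, |D j - v| ≤ E j) (hs : HasSum (fun j => pois l j * E j) s) :
    |∑' j, pois l j * D j - v| ≤ s := by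
  have h1 : HasSum (fun j => pois l j * (D j - v)) (∑' j, pois l j * D j - v) := by
    have := (summable_pois_mul hl hD).hasSum.sub ((hasSum_pois l).mul_right v)
    simpa [mul_sub] using this
  rw [← h1.tsum_eq, ← Real.norm_eq_abs]
  refine tsum_of_norm_bounded hs fun j => ?_
  rw [norm_mul, Real.norm_eq_abs, Real.norm_eq_abs, abs_of_nonneg (pois_nonneg hl j)]
  exact mul_le_mul_of_nonneg_left (hE j) (pois_nonneg hl j)

/-- Near `0` the kernel is `O(y)` uniformly in `h`, because the Poisson distribution rescaled by `h`
has mean `y`. -/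
lemma abs_Rker_le_near {D : ℕ → ℝ} {C L h y : ℝ} (hh : 0 < h) (hy : 0 ≤ y)
    (hDb : ∀ j, |D j| ≤ C) (hD : ∀ j : ℕ, |D j - D 0| ≤ L * (j * h)) :
    |Rker D h y| ≤ (|D 0| + L) * y := by
  have h1 := abs_tsum_pois_sub_le (E := fun j : ℕ => L * (j * h)) (v := D 0) (s := L * y)
    (div_nonneg hy hh.le) hDb hD (by
      have := (hasSum_pois_one (y / h)).mul_left (L * h)
      exact hasSum_congr' this (fun j => by ring) (by field_simp))
  have h2 : |Real.exp (-y) - 1| ≤ y := by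
    rw [abs_sub_comm, abs_of_nonneg (by simpa using hy)]
    linarith [Real.add_one_le_exp (-y)]
  have e : Rker D h y = D 0 * (Real.exp (-y) - 1) - (∑' j, pois (y / h) j * D j - D 0) := by
    unfold Rker; ring
  rw [e]
  calc _ ≤ |D 0 * (Real.exp (-y) - 1)| + |∑' j, pois (y / h) j * D j - D 0| := abs_sub _ _
    _ ≤ |D 0| * y + L * y := by
      rw [abs_mul]; gcongr
    _ = _ := by ring

/-- Tangent-line form of Jensen's inequality for `x ↦ x ^ β`. -/
lemma rpow_le_tangent {X y β : ℝ} (hX : 0 ≤ X) (hy : 0 < y) (hβ : 0 < β) (hβ1 : β ≤ 1) :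
    X ^ β ≤ y ^ (-β) * (β * (y * X) + (1 - β)) := by
  have h := Real.geom_mean_le_arith_mean2_weighted hβ.le (sub_nonneg.2 hβ1)
    (mul_nonneg hy.le hX) zero_le_one (by ring)
  rw [Real.one_rpow, mul_one, mul_one, Real.mul_rpow hy.le hX] at h
  rw [Real.rpow_neg hy.le]
  have hp : 0 < y ^ β := Real.rpow_pos_of_pos hy β
  rw [inv_mul_eq_div, le_div_iff₀ hp]
  linarith

/-- At infinity the kernel decays like `y ^ (-β)` uniformly in `h`: after bounding `1 + j h` below by
`h (j + 1)`, Jensen's inequality for `x ↦ x ^ β` reduces the claim to the Poisson average of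
`1 / (j + 1)`, which is at most `h / y`. -/
lemma abs_Rker_le_far {D : ℕ → ℝ} {C β h y : ℝ} (hh : 0 < h) (hh1 : h ≤ 1) (hy : 0 < y)
    (hβ : 0 < β) (hβ1 : β ≤ 1) (hC : 0 ≤ C)
    (hD : ∀ j : ℕ, |D j| ≤ C * (1 + j * h) ^ (-β)) :
    |Rker D h y| ≤ C * Real.exp (-y) + C * y ^ (-β) := by
  have hl : 0 < y / h := div_pos hy hh
  have hDb : ∀ j : ℕ, |D j| ≤ C := fun j => (hD j).trans (by
    have : (1 + (j : ℝ) * h) ^ (-β) ≤ 1 :=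
      Real.rpow_le_one_of_one_le_of_nonpos (by nlinarith [mul_nonneg j.cast_nonneg hh.le]) (by linarith)
    nlinarith)
  have hs : HasSum (fun j : ℕ => pois (y / h) j *
      (C * (y ^ (-β) * (β * (y * (1 / h * (1 / ((j : ℝ) + 1)))) + (1 - β)))))
      (C * (y ^ (-β) * (β * (1 - Real.exp (-(y / h))) + (1 - β)))) := by
    have := (((hasSum_pois_inv hl).mul_left (C * y ^ (-β) * β * y / h)).add
      ((hasSum_pois (y / h)).mul_left (C * y ^ (-β) * (1 - β))))
    exact hasSum_congr' this (fun j => by ring) (by field_simp)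
  have h1 := abs_tsum_pois_sub_le (v := 0) hl.le hDb (fun j => ?_) hs
  · have h2 : |D 0 * Real.exp (-y)| ≤ C * Real.exp (-y) := by
      rw [abs_mul, Real.abs_exp]; gcongr; exact hDb 0
    have h3 : C * (y ^ (-β) * (β * (1 - Real.exp (-(y / h))) + (1 - β))) ≤ C * y ^ (-β) := by
      have hp : 0 < y ^ (-β) := Real.rpow_pos_of_pos hy _
      have : β * (1 - Real.exp (-(y / h))) + (1 - β) ≤ 1 := by
        nlinarith [Real.exp_pos (-(y / h)), mul_pos hβ (Real.exp_pos (-(y / h)))]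
      have := mul_le_mul_of_nonneg_left this hp.le
      nlinarith
    rw [sub_zero] at h1
    unfold Rker
    exact (abs_sub _ _).trans (add_le_add h2 (h1.trans h3))
  · rw [sub_zero]
    refine (hD j).trans (mul_le_mul_of_nonneg_left ?_ hC)
    have hj : (0 : ℝ) ≤ j := j.cast_nonneg
    calc (1 + (j : ℝ) * h) ^ (-β) = ((1 + (j : ℝ) * h)⁻¹) ^ β := by
          rw [Real.rpow_neg (by positivity), Real.inv_rpow (by positivity)]
      _ ≤ (1 / h * (1 / ((j : ℝ) + 1))) ^ β := by
          refine Real.rpow_le_rpow (by positivity) ?_ hβ.le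
          rw [← one_div, div_mul_div_comm, one_mul]
          exact one_div_le_one_div_of_le (by positivity) (by nlinarith)
      _ ≤ _ := rpow_le_tangent (by positivity) hy hβ hβ1

/-- Weak law of large numbers: the Poisson distribution with mean `y / h`, rescaled by `h`,
concentrates at `y`, since its variance is `h y`. -/
lemma tendsto_Rker {D : ℝ → ℕ → ℝ} {g : ℝ → ℝ} {C B y : ℝ} (hy : 0 < y)
    (hDb : ∀ h > 0, ∀ j, |D h j| ≤ C) (hD0 : ∀ h > 0, D h 0 = g 0)
    (hD : ∀ h > 0, ∀ j : ℕ, |D h j - g (j * h)| ≤ B * h)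
    (hg : ∀ u v, |g u - g v| ≤ B * |u - v|) :
    Tendsto (fun h => Rker (D h) h y) (nhdsWithin 0 (Set.Ioi 0))
      (nhds (g 0 * Real.exp (-y) - g y)) := by
  have hB : 0 ≤ B := by
    have := (abs_nonneg _).trans (hg 1 0)
    simpa using this
  have key : ∀ h > 0, |Rker (D h) h y - (g 0 * Real.exp (-y) - g y)|
      ≤ B * h + B * (√h * y / 2 + √h / 2) := by
    intro h hh
    have hr : 0 < √h := Real.sqrt_pos.2 hh
    have hrr : √h * √h = h := Real.mul_self_sqrt hh.le
    have e : Rker (D h) h y - (g 0 * Real.exp (-y) - g y)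
        = -(∑' j, pois (y / h) j * D h j - g y) := by
      unfold Rker; rw [hD0 h hh]; ring
    rw [e, abs_neg]
    have hs : HasSum (fun j : ℕ => pois (y / h) j *
        (B * h + B * ((j * h - y) ^ 2 / (2 * √h) + √h / 2)))
        (B * h + B * (√h * y / 2 + √h / 2)) := by
      have h0 := (hasSum_pois (y / h)).mul_left (B * h + B * (y ^ 2 / (2 * √h) + √h / 2))
      have h1 := (hasSum_pois_one (y / h)).mul_left (B * (- 2 * h * y) / (2 * √h))
      have h2 := (hasSum_pois_two (y / h)).mul_left (B * h ^ 2 / (2 * √h))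
      refine hasSum_congr' ((h0.add h1).add h2) (fun j => by ring) ?_
      field_simp
      have : √h ^ 2 = h := by rw [pow_two, hrr]
      ring_nf
      rw [this]
    refine abs_tsum_pois_sub_le (div_nonneg hy.le hh.le) (hDb h hh) (fun j => ?_) hs
    -- arithmetic-geometric mean inequality, with weights balanced for a variance of order `h`
    have h1 : |(j : ℝ) * h - y| ≤ (j * h - y) ^ 2 / (2 * √h) + √h / 2 := by
      rw [div_add_div _ _ (by positivity) (by positivity), le_div_iff₀ (by positivity)]
      nlinarith [sq_nonneg (|(j : ℝ) * h - y| - √h), sq_abs ((j : ℝ) * h - y)]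
    calc |D h j - g y| ≤ |D h j - g (j * h)| + |g (j * h) - g y| := abs_sub_le _ _ _
      _ ≤ B * h + B * |(j : ℝ) * h - y| := add_le_add (hD h hh j) (hg _ _)
      _ ≤ _ := by gcongr
  rw [tendsto_iff_norm_sub_tendsto_zero]
  refine squeeze_zero' (Eventually.of_forall fun _ => norm_nonneg _)
    (eventually_nhdsWithin_of_forall fun h hh => key h hh) ?_
  have : Continuous fun h : ℝ => B * h + B * (√h * y / 2 + √h / 2) := by fun_prop
  have := this.tendsto 0
  simp only [Real.sqrt_zero, mul_zero, zero_mul, zero_div, add_zero] at this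
  exact this.mono_left nhdsWithin_le_nhds

/-! ### Gamma integrals on the imaginary axis -/

lemma norm_cpow_sub_one {s : ℂ} (hs : s.re = 0) {y : ℝ} (hy : 0 < y) :
    ‖(y : ℂ) ^ (s - 1)‖ = y⁻¹ := by
  rw [Complex.norm_cpow_eq_rpow_re_of_pos hy]
  simp [hs, Real.rpow_neg_one]

lemma norm_cpow_im {s : ℂ} (hs : s.re = 0) {y : ℝ} (hy : 0 < y) : ‖(y : ℂ) ^ s‖ = 1 := by
  rw [Complex.norm_cpow_eq_rpow_re_of_pos hy]
  simp [hs]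

lemma norm_cexp_sub_cexp_le (a b : ℂ) (m : ℝ) (ha : a.re ≤ m) (hb : b.re ≤ m) :
    ‖cexp a - cexp b‖ ≤ Real.exp m * ‖a - b‖ := by
  refine (convex_halfSpace_re_le m).norm_image_sub_le_of_norm_hasDerivWithin_le
    (f := cexp) (f' := cexp) (fun x _ => (Complex.hasDerivAt_exp x).hasDerivWithinAt)
    (fun x hx => ?_) hb ha
  rw [Complex.norm_exp]
  exact Real.exp_le_exp.2 hx

lemma norm_cexp_neg_sub_le {r : ℂ} {ρ y : ℝ} (h1 : ρ ≤ 1) (hr : ρ ≤ r.re) (hy : 0 ≤ y) :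
    ‖cexp (-(r * y)) - cexp (-y)‖ ≤ ‖r - 1‖ * y * Real.exp (-ρ * y) := by
  refine (norm_cexp_sub_cexp_le _ _ (-ρ * y) ?_ ?_).trans (le_of_eq ?_)
  · simp; nlinarith
  · simp; nlinarith
  · have : -(r * (y : ℂ)) - -(y : ℂ) = -((r - 1) * y) := by ring
    rw [this, norm_neg, norm_mul, Complex.norm_real, Real.norm_eq_abs, abs_of_nonneg hy]
    ring

lemma continuousOn_cpow_Ioi (s : ℂ) : ContinuousOn (fun y : ℝ => (y : ℂ) ^ s) (Ioi 0) := by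
  intro y hy
  exact (Complex.continuousAt_ofReal_cpow_const y s (Or.inr (ne_of_gt hy))).continuousWithinAt

lemma norm_gammaDiff_le {s r : ℂ} (hs : s.re = 0) {ρ y : ℝ} (h1 : ρ ≤ 1) (hr : ρ ≤ r.re)
    (hy : 0 < y) :
    ‖(y : ℂ) ^ (s - 1) * (cexp (-(r * y)) - cexp (-y))‖ ≤ ‖r - 1‖ * Real.exp (-ρ * y) := by
  rw [norm_mul, norm_cpow_sub_one hs hy]
  refine (mul_le_mul_of_nonneg_left (norm_cexp_neg_sub_le h1 hr hy.le)
    (inv_nonneg.2 hy.le)).trans (le_of_eq ?_)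
  field_simp

lemma integrable_gammaDiff {s r : ℂ} (hs : s.re = 0) (hr : 0 < r.re) :
    IntegrableOn (fun y : ℝ => (y : ℂ) ^ (s - 1) * (cexp (-(r * y)) - cexp (-y))) (Ioi 0) := by
  have hi : IntegrableOn (fun y : ℝ => ‖r - 1‖ * Real.exp (-(min 1 r.re) * y)) (Ioi 0) :=
    (integrableOn_exp_mul_Ioi (by simpa using hr) 0).const_mul _
  refine Integrable.mono' hi ?_ ?_
  · refine ContinuousOn.aestronglyMeasurable ?_ measurableSet_Ioi
    exact (continuousOn_cpow_Ioi _).mul (by fun_prop)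
  · refine (ae_restrict_iff' measurableSet_Ioi).2 (Eventually.of_forall fun y hy => ?_)
    exact norm_gammaDiff_le hs (min_le_left _ _) (min_le_right _ _) hy

/-- Differentiation in `r` removes the singularity at `y = 0`, which is not integrable for `Re s = 0`
without the compensating term `e^{-y}`. -/
lemma hasDerivAt_gammaDiff {s r : ℂ} (hs : s.re = 0) (hr : 0 < r.re) :
    HasDerivAt (fun r : ℂ => ∫ y : ℝ in Ioi 0, (y : ℂ) ^ (s - 1) * (cexp (-(r * y)) - cexp (-y)))
      (∫ y : ℝ in Ioi 0, -((y : ℂ) ^ s * cexp (-(r * y)))) r := by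
  have hb : {w : ℂ | r.re / 2 < w.re} ∈ nhds r :=
    (isOpen_lt continuous_const Complex.continuous_re).mem_nhds
      (show r.re / 2 < r.re by linarith)
  refine (hasDerivAt_integral_of_dominated_loc_of_deriv_le
    (bound := fun y : ℝ => Real.exp (-(r.re / 2) * y))
    (F := fun (r : ℂ) (y : ℝ) => (y : ℂ) ^ (s - 1) * (cexp (-(r * y)) - cexp (-y)))
    (F' := fun (r : ℂ) (y : ℝ) => -((y : ℂ) ^ s * cexp (-(r * y)))) hb ?_ ?_ ?_ ?_ ?_ ?_).2
  · refine Eventually.of_forall fun w => ?_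
    refine ContinuousOn.aestronglyMeasurable ?_ measurableSet_Ioi
    exact (continuousOn_cpow_Ioi _).mul (by fun_prop)
  · exact integrable_gammaDiff hs hr
  · refine ContinuousOn.aestronglyMeasurable ?_ measurableSet_Ioi
    exact ((continuousOn_cpow_Ioi _).mul (by fun_prop)).neg
  · refine (ae_restrict_iff' measurableSet_Ioi).2 (Eventually.of_forall fun y hy w hw => ?_)
    rw [norm_neg, norm_mul, norm_cpow_im hs hy, one_mul, Complex.norm_exp]
    refine Real.exp_le_exp.2 ?_
    have hw' : r.re / 2 < w.re := hw
    have hy' : (0 : ℝ) < y := hy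
    simp
    nlinarith
  · exact integrableOn_exp_mul_Ioi (by linarith) 0
  · refine (ae_restrict_iff' measurableSet_Ioi).2 (Eventually.of_forall fun y hy w _ => ?_)
    have hy' : (y : ℂ) ≠ 0 := by
      have : (0 : ℝ) < y := hy
      exact_mod_cast this.ne'
    have h1 : HasDerivAt (fun w : ℂ => -(w * (y : ℂ))) (-(1 * (y : ℂ))) w :=
      ((hasDerivAt_id w).mul_const _).neg
    have h2 := ((h1.cexp).sub_const (cexp (-y))).const_mul ((y : ℂ) ^ (s - 1))
    refine h2.congr_deriv ?_
    rw [Complex.cpow_sub _ _ hy', Complex.cpow_one]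
    field_simp

/-- Any primitive `P` of `-Γ(s+1) r^{-s-1}` on the right half-plane that vanishes at `1` computes
the integral of `y^{s-1} (e^{-ry} - e^{-y})`, for purely imaginary `s`. -/
lemma integral_gammaDiff_eq {s : ℂ} (hs : s.re = 0) {P : ℂ → ℂ} (hP1 : P 1 = 0)
    (hP : ∀ r : ℂ, 0 < r.re → HasDerivAt P (-((1 / r) ^ (s + 1) * Complex.Gamma (s + 1))) r)
    {r : ℂ} (hr : 0 < r.re) :
    ∫ y : ℝ in Ioi 0, (y : ℂ) ^ (s - 1) * (cexp (-(r * y)) - cexp (-y)) = P r := by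
  set U : Set ℂ := {w : ℂ | 0 < w.re} with hU
  have hUo : IsOpen U := isOpen_lt continuous_const Complex.continuous_re
  have hUc : IsPreconnected U := (convex_halfSpace_re_gt 0).isPreconnected
  have h1U : (1 : ℂ) ∈ U := by simp [hU]
  set J : ℂ → ℂ := fun r => ∫ y : ℝ in Ioi 0, (y : ℂ) ^ (s - 1) * (cexp (-(r * y)) - cexp (-y))
    with hJ
  have hJd : DifferentiableOn ℂ J U := fun w hw =>
    (hasDerivAt_gammaDiff hs hw).differentiableAt.differentiableWithinAt
  have hPd : DifferentiableOn ℂ P U := fun w hw => (hP w hw).differentiableAt.differentiableWithinAt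
  -- the derivatives agree on the positive real axis, hence on the half-plane by the identity theorem
  have hreal : ∀ t : ℝ, 0 < t → deriv J t = deriv P t := by
    intro t ht
    have htU : (0 : ℝ) < (t : ℂ).re := by simpa using ht
    rw [(hP t htU).deriv, (hasDerivAt_gammaDiff hs htU).deriv, integral_neg]
    have := Complex.integral_cpow_mul_exp_neg_mul_Ioi (a := s + 1) (r := t) (by simp [hs]) ht
    rw [add_sub_cancel_right] at this
    rw [this]
  have heq : EqOn (deriv J) (deriv P) U := by
    refine ((hJd.deriv hUo).analyticOnNhd hUo).eqOn_of_preconnected_of_frequently_eq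
      ((hPd.deriv hUo).analyticOnNhd hUo) hUc h1U ?_
    have ht : Tendsto (fun t : ℝ => (t : ℂ)) (nhdsWithin 1 (Ioi 1)) (nhdsWithin 1 {1}ᶜ) := by
      refine tendsto_nhdsWithin_iff.2 ⟨?_, ?_⟩
      · have : Tendsto (fun t : ℝ => (t : ℂ)) (nhds 1) (nhds ((1 : ℝ) : ℂ)) :=
          Complex.continuous_ofReal.tendsto 1
        rw [Complex.ofReal_one] at this
        exact this.mono_left nhdsWithin_le_nhds
      · refine eventually_nhdsWithin_of_forall fun t ht => ?_
        have : (1 : ℝ) < t := ht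
        simp only [mem_compl_iff, mem_singleton_iff]
        exact_mod_cast this.ne'
    refine ht.frequently (Eventually.frequently ?_)
    refine eventually_nhdsWithin_of_forall fun t ht => hreal t (zero_lt_one.trans ht)
  exact hUo.eqOn_of_deriv_eq hUc hJd hPd heq h1U (by simp [hJ, hP1]) hr

lemma integral_gammaDiff_of_ne {s : ℂ} (hs : s.re = 0) (hs0 : s ≠ 0) {r : ℂ} (hr : 0 < r.re) :
    ∫ y : ℝ in Ioi 0, (y : ℂ) ^ (s - 1) * (cexp (-(r * y)) - cexp (-y))
      = Complex.Gamma s * (r ^ (-s) - 1) := by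
  refine integral_gammaDiff_eq hs (P := fun r => Complex.Gamma s * (r ^ (-s) - 1)) (by simp)
    (fun w hw => ?_) hr
  have hw0 : w ≠ 0 := by rintro rfl; simp at hw
  have hsl : w ∈ Complex.slitPlane := Or.inl hw
  have h := (((hasDerivAt_id w).cpow_const (c := -s) hsl).sub_const 1).const_mul (Complex.Gamma s)
  refine h.congr_deriv ?_
  have harg : w.arg ≠ Real.pi := (Complex.mem_slitPlane_iff_arg.1 hsl).1
  rw [Complex.Gamma_add_one s hs0, one_div, Complex.inv_cpow _ _ harg, ← Complex.cpow_neg]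
  simp only [id, mul_one]
  rw [show -(s + 1) = -s - 1 by ring]
  ring

lemma integral_gammaDiff_zero {r : ℂ} (hr : 0 < r.re) :
    ∫ y : ℝ in Ioi 0, (y : ℂ) ^ ((0 : ℂ) - 1) * (cexp (-(r * y)) - cexp (-y))
      = -Complex.log r := by
  refine integral_gammaDiff_eq (s := 0) (by simp) (P := fun r => -Complex.log r) (by simp)
    (fun w hw => ?_) hr
  have h := (Complex.hasDerivAt_log (z := w) (Or.inl hw)).neg
  refine h.congr_deriv ?_
  simp

/-- Upper bound for `|Γ(it)|` from the reflection formula `Γ(z) Γ(1 - z) = π / sin (π z)`: for `t` away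
from `0` it is a constant times `exp (-π|t|/2)`. -/
lemma norm_Gamma_mul_exp_le {t : ℝ} (ht : 0 < |t|) :
    (‖Complex.Gamma (Complex.I * t)‖ * Real.exp (Real.pi * |t| / 2)) ^ 2
      ≤ 2 * Real.pi / (|t| * (1 - Real.exp (-(2 * Real.pi * |t|)))) := by
  have ht0 : t ≠ 0 := abs_pos.1 ht
  have htC : Complex.I * (t : ℂ) ≠ 0 := mul_ne_zero Complex.I_ne_zero (by exact_mod_cast ht0)
  have h1 := Complex.Gamma_mul_Gamma_one_sub (Complex.I * t)
  have h2 : Complex.Gamma (1 - Complex.I * t) = -(Complex.I * t) * Complex.Gamma (-(Complex.I * t)) := by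
    rw [← Complex.Gamma_add_one _ (neg_ne_zero.2 htC)]; ring_nf
  have h3 : ‖Complex.Gamma (-(Complex.I * t))‖ = ‖Complex.Gamma (Complex.I * t)‖ := by
    have : -(Complex.I * (t : ℂ)) = starRingEnd ℂ (Complex.I * t) := by simp
    rw [this, Complex.Gamma_conj, RCLike.norm_conj]
  have h4 : ‖Complex.sin (Real.pi * (Complex.I * t))‖ = Real.sinh (Real.pi * |t|) := by
    have : (Real.pi : ℂ) * (Complex.I * t) = ((Real.pi * t : ℝ) : ℂ) * Complex.I := by push_cast; ring
    rw [this, Complex.sin_mul_I, norm_mul, Complex.norm_I, mul_one, ← Complex.ofReal_sinh,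
      Complex.norm_real, Real.norm_eq_abs, Real.abs_sinh, abs_mul, abs_of_pos Real.pi_pos]
  have h5 := congrArg norm h1
  rw [h2, norm_mul, norm_mul, h3, norm_div, h4, norm_neg, norm_mul, Complex.norm_I, one_mul,
    Complex.norm_real, Complex.norm_real, Real.norm_eq_abs, Real.norm_eq_abs,
    abs_of_pos Real.pi_pos] at h5
  have hX : Real.exp (Real.pi * |t| / 2) ^ 2 = Real.exp (Real.pi * |t|) := by
    rw [← Real.exp_nat_mul]; congr 1; push_cast; ring
  have hY : Real.exp (-(2 * Real.pi * |t|)) = (Real.exp (Real.pi * |t|))⁻¹ ^ 2 := by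
    rw [← Real.exp_neg, ← Real.exp_nat_mul]; congr 1; push_cast; ring
  have hE1 : 1 < Real.exp (Real.pi * |t|) := Real.one_lt_exp_iff.2 (by positivity)
  rw [Real.sinh_eq, Real.exp_neg] at h5
  rw [mul_pow, hX, hY]
  set E := Real.exp (Real.pi * |t|)
  set A := ‖Complex.Gamma (Complex.I * t)‖
  have hE : 0 < E := by linarith
  have hq : 0 < E - E⁻¹ := by
    have : E⁻¹ < 1 := inv_lt_one_of_one_lt₀ hE1
    linarith
  have hq2 : 0 < 1 - E⁻¹ ^ 2 := by
    have : E * (1 - E⁻¹ ^ 2) = E - E⁻¹ := by field_simp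
    by_contra hcon
    nlinarith
  rw [le_div_iff₀ (by positivity)]
  have h6 : E * (1 - E⁻¹ ^ 2) = E - E⁻¹ := by field_simp
  rw [eq_div_iff (by positivity)] at h5
  refine le_of_eq ?_
  linear_combination 2 * h5 + A ^ 2 * |t| * h6

lemma exists_norm_Gamma_bound {t₀ : ℝ} (ht₀ : 0 < t₀) :
    ∃ C, 0 ≤ C ∧ ∀ t : ℝ, t₀ ≤ |t| →
      ‖Complex.Gamma (Complex.I * t)‖ * Real.exp (Real.pi * |t| / 2) ≤ C := by
  set m := 2 * Real.pi / (t₀ * (1 - Real.exp (-(2 * Real.pi * t₀))))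
  have hd : 0 < 1 - Real.exp (-(2 * Real.pi * t₀)) := by
    have : Real.exp (-(2 * Real.pi * t₀)) < 1 := Real.exp_lt_one_iff.2 (neg_lt_zero.2 (by positivity))
    linarith
  refine ⟨√m, Real.sqrt_nonneg _, fun t ht => Real.le_sqrt_of_sq_le ?_⟩
  refine (norm_Gamma_mul_exp_le (ht₀.trans_le ht)).trans ?_
  refine div_le_div_of_nonneg_left (by positivity) (by positivity) ?_
  gcongr

/-! ### Fourier series of the tail and the layer-cake formula -/

/-- The purely imaginary exponent `i k b`. -/
def sk (b : ℝ) (k : ℤ) : ℂ := Complex.I * (k : ℂ) * (b : ℂ)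

lemma sk_eq (b : ℝ) (k : ℤ) : sk b k = Complex.I * ((k * b : ℝ) : ℂ) := by
  simp [sk, mul_assoc]

lemma sk_re (b : ℝ) (k : ℤ) : (sk b k).re = 0 := by simp [sk_eq]

lemma sk_im (b : ℝ) (k : ℤ) : (sk b k).im = k * b := by simp [sk_eq]

lemma sk_zero (b : ℝ) : sk b 0 = 0 := by simp [sk]

lemma sk_ne_zero {b : ℝ} (hb : 0 < b) {k : ℤ} (hk : k ≠ 0) : sk b k ≠ 0 := by
  simp [sk, hk, hb.ne']

section theta

variable {b : ℝ} {θ : ℝ → ℝ} {cfs : ℤ → ℂ}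

lemma hasSum_theta_cpow
    (hθ : ∀ x : ℝ, HasSum (fun k : ℤ => cfs k * cexp (sk b k * x)) (θ x : ℂ))
    {y : ℝ} (hy : 0 < y) :
    HasSum (fun k : ℤ => cfs k * (y : ℂ) ^ sk b k) (θ (Real.log y) : ℂ) := by
  convert hθ (Real.log y) using 3 with k
  rw [Complex.cpow_def_of_ne_zero (by exact_mod_cast hy.ne'), Complex.ofReal_log hy.le, mul_comm]

lemma abs_theta_le (hs : Summable fun k => ‖cfs k‖)
    (hθ : ∀ x : ℝ, HasSum (fun k : ℤ => cfs k * cexp (sk b k * x)) (θ x : ℂ)) (x : ℝ) :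
    |θ x| ≤ ∑' k, ‖cfs k‖ := by
  rw [← Real.norm_eq_abs, ← Complex.norm_real, ← (hθ x).tsum_eq]
  refine tsum_of_norm_bounded hs.hasSum fun k => ?_
  rw [norm_mul, Complex.norm_exp]
  simp [sk_re]

/-- Termwise integration of the Fourier series of `θ (log y)` against `R y / y`. -/
lemma hasSum_theta_integral (hs : Summable fun k => ‖cfs k‖)
    (hθ : ∀ x : ℝ, HasSum (fun k : ℤ => cfs k * cexp (sk b k * x)) (θ x : ℂ))
    {R : ℝ → ℂ} (hR : IntegrableOn (fun y : ℝ => (y : ℂ) ^ ((0 : ℂ) - 1) * R y) (Ioi 0)) :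
    HasSum (fun k : ℤ => cfs k * ∫ y : ℝ in Ioi 0, (y : ℂ) ^ (sk b k - 1) * R y)
      (∫ y : ℝ in Ioi 0, ((θ (Real.log y) / y : ℝ) : ℂ) * R y) := by
  simp_rw [← integral_const_mul]
  have hid : ∀ (s : ℂ) {y : ℝ}, 0 < y →
      (y : ℂ) ^ (s - 1) * R y = (y : ℂ) ^ s * ((y : ℂ) ^ ((0 : ℂ) - 1) * R y) := by
    intro s y hy
    have hy0 : (y : ℂ) ≠ 0 := by exact_mod_cast hy.ne'
    rw [← mul_assoc, ← Complex.cpow_add _ _ hy0]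
    ring_nf
  refine hasSum_integral_of_dominated_convergence
    (fun k y => ‖cfs k‖ * ‖(y : ℂ) ^ ((0 : ℂ) - 1) * R y‖) ?_ ?_ ?_ ?_ ?_
  · intro k
    have : AEStronglyMeasurable (fun y : ℝ => cfs k *
        ((y : ℂ) ^ (sk b k) * ((y : ℂ) ^ ((0 : ℂ) - 1) * R y))) (volume.restrict (Ioi 0)) :=
      (((continuousOn_cpow_Ioi _).aestronglyMeasurable measurableSet_Ioi).mul
        hR.aestronglyMeasurable).const_mul _
    refine this.congr ?_
    refine (ae_restrict_iff' measurableSet_Ioi).2 (Eventually.of_forall fun y hy => ?_)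
    simp only
    rw [hid (sk b k) hy]
  · intro k
    refine (ae_restrict_iff' measurableSet_Ioi).2 (Eventually.of_forall fun y hy => ?_)
    rw [hid (sk b k) hy, norm_mul, norm_mul _ ((y : ℂ) ^ ((0 : ℂ) - 1) * R y),
      norm_cpow_im (sk_re b k) hy, one_mul]
  · exact Eventually.of_forall fun y => hs.mul_right _
  · simp_rw [tsum_mul_right]
    exact hR.norm.const_mul _
  · refine (ae_restrict_iff' measurableSet_Ioi).2 (Eventually.of_forall fun y hy => ?_)
    have hy' : (0 : ℝ) < y := hy
    have h := (hasSum_theta_cpow hθ hy').mul_right ((y : ℂ) ^ ((0 : ℂ) - 1) * R y)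
    refine hasSum_congr' h (fun k => ?_) ?_
    · rw [hid (sk b k) hy', mul_assoc]
    · rw [← mul_assoc, zero_sub, Complex.cpow_neg_one]
      push_cast
      ring

lemma integrableOn_theta_mul (hs : Summable fun k => ‖cfs k‖) (hc : Continuous θ)
    (hθ : ∀ x : ℝ, HasSum (fun k : ℤ => cfs k * cexp (sk b k * x)) (θ x : ℂ))
    {R : ℝ → ℝ} (hR : IntegrableOn (fun y : ℝ => y⁻¹ * R y) (Ioi 0)) :
    IntegrableOn (fun y : ℝ => θ (Real.log y) / y * R y) (Ioi 0) := by
  have h := Integrable.bdd_mul (c := ∑' k, ‖cfs k‖) hR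
    (f := fun y => θ (Real.log y))
    ((hc.measurable.comp Real.measurable_log).aestronglyMeasurable)
    (Eventually.of_forall fun y => abs_theta_le hs hθ _)
  refine h.congr (Eventually.of_forall fun y => ?_)
  simp only
  ring

end theta

section layer

variable {θ : ℝ → ℝ} {φ : Measure ℝ}

lemma sigmaFinite_of_tail
    (hφ : ∀ r : ℝ, 0 < r → φ (Set.Ioi r) = ENNReal.ofReal (r ^ (-1 : ℝ) * θ (Real.log r)))
    (hφ0 : φ (Set.Iic 0) = 0) : SigmaFinite φ := by
  refine ⟨⟨⟨fun n : ℕ => Iic 0 ∪ Ioi (1 / ((n : ℝ) + 1)), fun _ => trivial, fun n => ?_, ?_⟩⟩⟩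
  · refine (measure_union_le _ _).trans_lt ?_
    rw [hφ0, hφ _ Nat.one_div_pos_of_nat]
    simp
  · refine eq_univ_of_forall fun x => ?_
    rcases le_or_gt x 0 with hx | hx
    · exact mem_iUnion.2 ⟨0, Or.inl hx⟩
    · obtain ⟨n, hn⟩ := exists_nat_one_div_lt hx
      exact mem_iUnion.2 ⟨n, Or.inr hn⟩

/-- Fubini for a measure given by its tail function: integrating `F' u` times the indicator of `u < y` over `u` first gives
`F y`, and over `y` first gives `F' u` times the tail. -/
lemma integral_layer (hpos : ∀ x, 0 < θ x)
    (hφ : ∀ r : ℝ, 0 < r → φ (Set.Ioi r) = ENNReal.ofReal (r ^ (-1 : ℝ) * θ (Real.log r)))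
    (hφ0 : φ (Set.Iic 0) = 0) {F F' : ℝ → ℝ} (hF : ∀ y, HasDerivAt F (F' y) y)
    (hF' : Continuous F') (hF0 : F 0 = 0)
    (hi : IntegrableOn (fun y => θ (Real.log y) / y * F' y) (Ioi 0)) :
    Integrable F φ ∧ ∫ y, F y ∂φ = ∫ y in Ioi 0, θ (Real.log y) / y * F' y := by
  have := sigmaFinite_of_tail hφ hφ0
  set ν : Measure ℝ := volume.restrict (Ioi 0) with hν
  set K : ℝ → ℝ → ℝ := fun y u => (Ioi u).indicator (fun _ => F' u) y with hK
  have hreal : ∀ u : ℝ, 0 < u → φ.real (Ioi u) = θ (Real.log u) / u := by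
    intro u hu
    rw [Measure.real, hφ u hu, ENNReal.toReal_ofReal, Real.rpow_neg_one]
    · field_simp
    · exact mul_nonneg (Real.rpow_nonneg hu.le _) (hpos _).le
  have hmeas : Measurable (Function.uncurry K) := by
    have : Function.uncurry K = {p : ℝ × ℝ | p.2 < p.1}.indicator (fun p => F' p.2) := by
      ext ⟨y, u⟩
      simp [K, Set.indicator]
    rw [this]
    exact (hF'.measurable.comp measurable_snd).indicator
      (measurableSet_lt measurable_snd measurable_fst)
  have hint1 : ∀ u : ℝ, 0 < u → ∫ y, K y u ∂φ = θ (Real.log u) / u * F' u := by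
    intro u hu
    simp only [K]
    rw [integral_indicator_const _ measurableSet_Ioi, hreal u hu, smul_eq_mul]
  have hint2 : ∀ u : ℝ, 0 < u → ∫ y, ‖K y u‖ ∂φ = ‖θ (Real.log u) / u * F' u‖ := by
    intro u hu
    have : ∀ y, ‖K y u‖ = (Ioi u).indicator (fun _ => ‖F' u‖) y := by
      intro y; simp only [K]; rw [norm_indicator_eq_indicator_norm]
    simp_rw [this]
    rw [integral_indicator_const _ measurableSet_Ioi, hreal u hu, smul_eq_mul, norm_mul,
      Real.norm_of_nonneg (div_nonneg (hpos _).le hu.le)]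
  have hprod : Integrable (Function.uncurry K) (φ.prod ν) := by
    rw [integrable_prod_iff' hmeas.aestronglyMeasurable]
    refine ⟨?_, ?_⟩
    · refine (ae_restrict_iff' measurableSet_Ioi).2 (Eventually.of_forall fun u hu => ?_)
      refine IntegrableOn.integrable_indicator ?_ measurableSet_Ioi
      have : IntegrableOn (fun _ : ℝ => F' u) (Ioi u) φ :=
        integrableOn_const (by rw [hφ u hu]; exact ENNReal.ofReal_ne_top)
      exact this
    · refine hi.norm.congr ?_
      refine (ae_restrict_iff' measurableSet_Ioi).2 (Eventually.of_forall fun u hu => ?_)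
      exact (hint2 u hu).symm
  have hFK : ∀ᵐ y ∂φ, ∫ u, K y u ∂ν = F y := by
    have h0 : ∀ᵐ y ∂φ, y ∉ Iic (0 : ℝ) := measure_eq_zero_iff_ae_notMem.1 hφ0
    filter_upwards [h0] with y hy
    have hy : 0 < y := by simpa using hy
    have : ∀ u, K y u = (Iio y).indicator F' u := by
      intro u; simp [K, Set.indicator]
    simp_rw [this]
    rw [integral_indicator measurableSet_Iio, hν, Measure.restrict_restrict measurableSet_Iio,
      Iio_inter_Ioi, ← integral_Ioc_eq_integral_Ioo, ← intervalIntegral.integral_of_le hy.le,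
      intervalIntegral.integral_eq_sub_of_hasDerivAt (fun x _ => hF x)
        (hF'.intervalIntegrable _ _), hF0, sub_zero]
  refine ⟨hprod.integral_prod_left.congr hFK, ?_⟩
  rw [← integral_congr_ae hFK, integral_integral_swap hprod]
  exact setIntegral_congr_fun measurableSet_Ioi fun u hu => hint1 u hu

end layer

/-! ### Regularised cosine kernel -/

section cosine

/-- The primitive of `exp (-ε y) * cos y - exp (-y)` vanishing at `0`. -/
def Feps (ε y : ℝ) : ℝ :=
  (Real.exp (-(ε * y)) * (Real.sin y - ε * Real.cos y) + ε) / (1 + ε ^ 2) - (1 - Real.exp (-y))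

lemma hasDerivAt_Feps (ε y : ℝ) :
    HasDerivAt (Feps ε) (Real.exp (-(ε * y)) * Real.cos y - Real.exp (-y)) y := by
  have h1 : HasDerivAt (fun y : ℝ => Real.exp (-(ε * y))) (Real.exp (-(ε * y)) * -(ε * 1)) y :=
    (((hasDerivAt_id y).const_mul ε).neg).exp
  have h2 := (Real.hasDerivAt_sin y).sub ((Real.hasDerivAt_cos y).const_mul ε)
  have h3 : HasDerivAt (fun y : ℝ => Real.exp (-y)) (Real.exp (-y) * -1) y :=
    ((hasDerivAt_id y).neg).exp
  have h := (((h1.mul h2).add_const ε).div_const (1 + ε ^ 2)).sub (h3.const_sub 1)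
  refine h.congr_deriv ?_
  have : (1 + ε ^ 2) ≠ 0 := by positivity
  simp only [Pi.sub_apply]
  field_simp
  ring

lemma Feps_zero_right (ε : ℝ) : Feps ε 0 = 0 := by simp [Feps]

lemma abs_Feps_deriv_le {ε y : ℝ} (h0 : 0 ≤ ε) (h1 : ε ≤ 1) (hy : 0 ≤ y) (hy1 : y ≤ 1) :
    |Real.exp (-(ε * y)) * Real.cos y - Real.exp (-y)| ≤ 3 * y := by
  have e1 : Real.exp (-(ε * y)) ≤ 1 := Real.exp_le_one_iff.2 (by nlinarith [mul_nonneg h0 hy])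
  have e1' := Real.add_one_le_exp (-(ε * y))
  have e2 : Real.exp (-y) ≤ 1 := Real.exp_le_one_iff.2 (by linarith)
  have e2' := Real.add_one_le_exp (-y)
  have c1 := Real.cos_le_one y
  have c2 := Real.one_sub_sq_div_two_le_cos (x := y)
  have hp := Real.exp_pos (-(ε * y))
  have h3 : ε * y ≤ y := by nlinarith
  rw [abs_le]
  constructor
  · nlinarith
  · nlinarith

/-- A majorant of `Feps ε` uniform in `ε ∈ [0, 1]`. Both `min y 1 ^ 2` and `(1 - e^{-y}) ^ 2` have the
right order; the latter is smooth, so `integral_layer` applies to it. -/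
lemma abs_Feps_le {ε y : ℝ} (h0 : 0 ≤ ε) (h1 : ε ≤ 1) (hy : 0 < y) :
    |Feps ε y| ≤ 16 * (1 - Real.exp (-y)) ^ 2 := by
  have hq : 0 < 1 + y := by linarith
  have hlow : y / (1 + y) ≤ 1 - Real.exp (-y) := by
    rw [Real.exp_neg]
    have h := Real.add_one_le_exp y
    have : (Real.exp y)⁻¹ ≤ (1 + y)⁻¹ := inv_anti₀ hq (by linarith)
    have e : y / (1 + y) = 1 - (1 + y)⁻¹ := by field_simp; ring
    linarith
  rcases le_or_gt y 1 with hy1 | hy1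
  · have hb : |Feps ε y - Feps ε 0| ≤ 3 * y * |y - 0| := by
      have := (convex_Icc (0 : ℝ) y).norm_image_sub_le_of_norm_hasDerivWithin_le
        (f := Feps ε) (C := 3 * y)
        (fun x _ => (hasDerivAt_Feps ε x).hasDerivWithinAt)
        (fun x hx => (abs_Feps_deriv_le h0 h1 hx.1 (hx.2.trans hy1)).trans
          (by linarith [hx.2])) (left_mem_Icc.2 hy.le) (right_mem_Icc.2 hy.le)
      exact this
    rw [Feps_zero_right, sub_zero, sub_zero, abs_of_pos hy] at hb
    have : y / 2 ≤ 1 - Real.exp (-y) := by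
      refine le_trans ?_ hlow
      exact div_le_div_of_nonneg_left hy.le hq (by linarith)
    nlinarith
  · have h2 : 1 / 2 ≤ 1 - Real.exp (-y) := by
      refine le_trans ?_ hlow
      rw [div_le_div_iff₀ (by norm_num) hq]; linarith
    have h3 : |Feps ε y| ≤ 4 := by
      have e1 : Real.exp (-(ε * y)) ≤ 1 := Real.exp_le_one_iff.2 (by nlinarith)
      have e2 := Real.exp_pos (-y)
      have e3 : |Real.sin y - ε * Real.cos y| ≤ 2 := by
        refine (abs_sub _ _).trans ?_
        rw [abs_mul, abs_of_nonneg h0]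
        have := Real.abs_sin_le_one y
        have := mul_le_mul h1 (Real.abs_cos_le_one y) (abs_nonneg _) zero_le_one
        linarith
      have e4 : |Real.exp (-(ε * y)) * (Real.sin y - ε * Real.cos y) + ε| ≤ 3 := by
        refine (abs_add_le _ _).trans ?_
        rw [abs_mul, Real.abs_exp, abs_of_nonneg h0]
        have := mul_le_mul e1 e3 (abs_nonneg _) zero_le_one
        linarith
      unfold Feps
      refine (abs_sub _ _).trans ?_
      have e5 : |1 - Real.exp (-y)| ≤ 1 := by rw [abs_of_nonneg (by linarith)]; linarith
      have e6 : |(Real.exp (-(ε * y)) * (Real.sin y - ε * Real.cos y) + ε) / (1 + ε ^ 2)| ≤ 3 := by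
        rw [abs_div, abs_of_pos (by positivity : 0 < 1 + ε ^ 2), div_le_iff₀ (by positivity)]
        nlinarith [sq_nonneg ε]
      linarith
    nlinarith

/-- The regularised Gamma factor: the value of `∫ y^{s_k-1} (e^{-ry} - e^{-y}) dy` for `Re r > 0`, with
`s_k = i k b`, continued to the imaginary axis. Since `s_0 = 0`, the case `k = 0` is a Frullani
integral with value `-log r`. -/
def Vk (b : ℝ) (k : ℤ) (r : ℂ) : ℂ :=
  if k = 0 then -Complex.log r else Complex.Gamma (sk b k) * (r ^ (-sk b k) - 1)

lemma integral_eq_Vk {b : ℝ} (hb : 0 < b) (k : ℤ) {r : ℂ} (hr : 0 < r.re) :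
    ∫ y : ℝ in Ioi 0, (y : ℂ) ^ (sk b k - 1) * (cexp (-(r * y)) - cexp (-y)) = Vk b k r := by
  unfold Vk
  split_ifs with hk
  · rw [hk, sk_zero, integral_gammaDiff_zero hr]
  · rw [integral_gammaDiff_of_ne (sk_re b k) (sk_ne_zero hb hk) hr]

lemma norm_cpow_neg_sk_le {b : ℝ} {k : ℤ} {r : ℂ} (hr : 0 ≤ r.re) (hr0 : r ≠ 0) :
    ‖r ^ (-sk b k)‖ ≤ Real.exp (Real.pi * |k * b| / 2) := by
  rw [Complex.norm_cpow_of_ne_zero hr0]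
  simp only [Complex.neg_re, sk_re, neg_zero, Real.rpow_zero, Complex.neg_im, sk_im]
  rw [one_div, ← Real.exp_neg]
  refine Real.exp_le_exp.2 ?_
  have h1 : |r.arg| ≤ Real.pi / 2 := Complex.abs_arg_le_pi_div_two_iff.2 hr
  calc _ ≤ |-(r.arg * -(k * b))| := le_abs_self _
    _ = |r.arg| * |k * b| := by rw [abs_neg, abs_mul, abs_neg]
    _ ≤ Real.pi / 2 * |k * b| := by gcongr
    _ = _ := by ring

/-- Uniform bounds in `k`: the growth `exp (π|k b|/2)` of `r^{-s_k}` on the closed half-plane is exactly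
compensated by the decay of `Γ(s_k)`. -/
lemma exists_Vk_bound {b : ℝ} (hb : 0 < b) :
    ∃ C, 0 ≤ C ∧ (∀ k : ℤ, k ≠ 0 → ‖Complex.Gamma (sk b k)‖ ≤ C) ∧
      ∀ k : ℤ, k ≠ 0 → ∀ r : ℂ, 0 ≤ r.re → r ≠ 0 → ‖Vk b k r‖ ≤ 2 * C := by
  obtain ⟨C, hC, h⟩ := exists_norm_Gamma_bound hb
  have hkb : ∀ k : ℤ, k ≠ 0 → b ≤ |(k : ℝ) * b| := by
    intro k hk
    have : (1 : ℝ) ≤ |(k : ℝ)| := by exact_mod_cast Int.one_le_abs hk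
    rw [abs_mul, abs_of_pos hb]; nlinarith
  have hE : ∀ k : ℤ, 1 ≤ Real.exp (Real.pi * |k * b| / 2) := fun k =>
    Real.one_le_exp (by positivity)
  refine ⟨C, hC, fun k hk => ?_, fun k hk r hr hr0 => ?_⟩
  · have := h _ (hkb k hk)
    rw [sk_eq]
    nlinarith [hE k, norm_nonneg (Complex.Gamma (Complex.I * ((k * b : ℝ) : ℂ)))]
  · have h1 := h _ (hkb k hk)
    rw [← sk_eq] at h1
    rw [Vk, if_neg hk, norm_mul]
    have h2 : ‖r ^ (-sk b k) - 1‖ ≤ 2 * Real.exp (Real.pi * |k * b| / 2) := by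
      refine (norm_sub_le _ _).trans ?_
      rw [norm_one]
      linarith [norm_cpow_neg_sk_le (b := b) (k := k) hr hr0, hE k]
    calc _ ≤ ‖Complex.Gamma (sk b k)‖ * (2 * Real.exp (Real.pi * |k * b| / 2)) := by gcongr
      _ ≤ 2 * C := by linarith

/-- The average of the boundary values of `Vk` at `r = i` and `r = -i`; see `avg_Vk_I`. -/
def Wk (b : ℝ) (k : ℤ) : ℂ :=
  if k = 0 then 0
  else Complex.Gamma (sk b k) * (Complex.cos ((Real.pi : ℂ) / 2 * sk b k) - 1)

lemma avg_Vk_I {b : ℝ} (k : ℤ) :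
    (Vk b k (-Complex.I) + Vk b k Complex.I) / 2 = Wk b k := by
  unfold Vk Wk
  split_ifs with hk
  · rw [Complex.log_I, Complex.log_neg_I]; ring
  · rw [Complex.cpow_def_of_ne_zero (neg_ne_zero.2 Complex.I_ne_zero),
      Complex.cpow_def_of_ne_zero Complex.I_ne_zero, Complex.log_I, Complex.log_neg_I, Complex.cos]
    have e1 : -((Real.pi : ℂ) / 2) * Complex.I * -sk b k = (Real.pi : ℂ) / 2 * sk b k * Complex.I := by
      ring
    have e2 : ((Real.pi : ℂ) / 2) * Complex.I * -sk b k = -((Real.pi : ℂ) / 2 * sk b k) * Complex.I := by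
      ring
    rw [e1, e2]; ring

lemma continuousAt_Vk {b : ℝ} (k : ℤ) {r : ℂ} (hr : r ∈ Complex.slitPlane) :
    ContinuousAt (Vk b k) r := by
  unfold Vk
  split_ifs with hk
  · exact (continuousAt_clog hr).neg
  · exact ((continuousAt_cpow_const hr).sub continuousAt_const).const_mul _

end cosine

/-! ### The compensator -/

section K

variable {b : ℝ} {θ : ℝ → ℝ} {cfs : ℤ → ℂ} {φ : Measure ℝ}

lemma cpow_neg_one_mul_ofReal (R : ℝ → ℝ) :
    (fun y : ℝ => (y : ℂ) ^ ((0 : ℂ) - 1) * (R y : ℂ)) = fun y : ℝ => ((y⁻¹ * R y : ℝ) : ℂ) := by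
  funext y
  rw [zero_sub, Complex.cpow_neg_one]
  push_cast
  rfl

lemma integrableOn_ofReal_iff {R : ℝ → ℝ} :
    IntegrableOn (fun y : ℝ => (y : ℂ) ^ ((0 : ℂ) - 1) * (R y : ℂ)) (Ioi 0) ↔
      IntegrableOn (fun y : ℝ => y⁻¹ * R y) (Ioi 0) := by
  rw [cpow_neg_one_mul_ofReal]
  exact ⟨fun h => by simpa [IntegrableOn] using h.re, fun h => h.ofReal⟩

lemma hasSum_theta_integral_real (hs : Summable fun k => ‖cfs k‖)
    (hθ : ∀ x : ℝ, HasSum (fun k : ℤ => cfs k * cexp (sk b k * x)) (θ x : ℂ))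
    {R : ℝ → ℝ} (hR : IntegrableOn (fun y : ℝ => y⁻¹ * R y) (Ioi 0)) :
    HasSum (fun k : ℤ => cfs k * ∫ y : ℝ in Ioi 0, (y : ℂ) ^ (sk b k - 1) * (R y : ℂ))
      ((∫ y : ℝ in Ioi 0, θ (Real.log y) / y * R y : ℝ) : ℂ) := by
  have h := hasSum_theta_integral hs hθ (integrableOn_ofReal_iff.2 hR)
  rw [← integral_complex_ofReal]
  refine hasSum_congr' h (fun _ => rfl) ?_
  refine integral_congr_ae (Eventually.of_forall fun y => ?_)
  simp only [Complex.ofReal_mul]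

/-- The integrand `exp (-ε y) * cos y - exp (-y)` as an average of two Gamma-type integrands. -/
lemma eps_kernel_eq (ε y : ℝ) :
    ((Real.exp (-(ε * y)) * Real.cos y - Real.exp (-y) : ℝ) : ℂ) =
      ((cexp (-((ε - Complex.I) * y)) - cexp (-y)) + (cexp (-((ε + Complex.I) * y)) - cexp (-y))) / 2 := by
  push_cast
  rw [Complex.cos]
  have e1 : -(((ε : ℂ) - Complex.I) * y) = -(ε * y) + y * Complex.I := by ring
  have e2 : -(((ε : ℂ) + Complex.I) * y) = -(ε * y) + -y * Complex.I := by ring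
  rw [e1, e2, Complex.exp_add, Complex.exp_add]
  ring

lemma integrable_eps_kernel {ε : ℝ} (hε : 0 < ε) {s : ℂ} (hs : s.re = 0) :
    IntegrableOn (fun y : ℝ => (y : ℂ) ^ (s - 1) *
      ((Real.exp (-(ε * y)) * Real.cos y - Real.exp (-y) : ℝ) : ℂ)) (Ioi 0) := by
  have h1 := integrable_gammaDiff (s := s) (r := (ε : ℂ) - Complex.I) hs (by simpa using hε)
  have h2 := integrable_gammaDiff (s := s) (r := (ε : ℂ) + Complex.I) hs (by simpa using hε)
  refine ((h1.add h2).div_const 2).congr (Eventually.of_forall fun y => ?_)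
  simp only [Pi.add_apply, eps_kernel_eq]
  ring

lemma integral_eps_kernel (hb : 0 < b) (k : ℤ) {ε : ℝ} (hε : 0 < ε) :
    ∫ y : ℝ in Ioi 0, (y : ℂ) ^ (sk b k - 1) *
      ((Real.exp (-(ε * y)) * Real.cos y - Real.exp (-y) : ℝ) : ℂ) =
      (Vk b k (ε - Complex.I) + Vk b k (ε + Complex.I)) / 2 := by
  have hr1 : 0 < ((ε : ℂ) - Complex.I).re := by simpa using hε
  have hr2 : 0 < ((ε : ℂ) + Complex.I).re := by simpa using hε
  rw [← integral_eq_Vk hb k hr1, ← integral_eq_Vk hb k hr2,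
    ← integral_add (integrable_gammaDiff (sk_re b k) hr1) (integrable_gammaDiff (sk_re b k) hr2),
    ← integral_div]
  refine integral_congr_ae (Eventually.of_forall fun y => ?_)
  simp only [eps_kernel_eq]
  ring

/-- For `ε > 0` the integral of `Feps ε` against the tail measure is given by its Fourier series. -/
lemma hasSum_Feps (hb : 0 < b) (hs : Summable fun k => ‖cfs k‖) (hc : Continuous θ)
    (hθ : ∀ x : ℝ, HasSum (fun k : ℤ => cfs k * cexp (sk b k * x)) (θ x : ℂ))
    (hpos : ∀ x, 0 < θ x)
    (hφ : ∀ r : ℝ, 0 < r → φ (Set.Ioi r) = ENNReal.ofReal (r ^ (-1 : ℝ) * θ (Real.log r)))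
    (hφ0 : φ (Set.Iic 0) = 0) {ε : ℝ} (hε : 0 < ε) :
    HasSum (fun k : ℤ => cfs k * ((Vk b k (ε - Complex.I) + Vk b k (ε + Complex.I)) / 2))
      ((∫ y, Feps ε y ∂φ : ℝ) : ℂ) := by
  have hR := integrableOn_ofReal_iff.1 (integrable_eps_kernel hε (s := 0) rfl)
  have h1 := hasSum_theta_integral_real hs hθ hR
  have h2 := integral_layer hpos hφ hφ0 (hasDerivAt_Feps ε) (by fun_prop) (Feps_zero_right ε)
    (integrableOn_theta_mul hs hc hθ hR)
  rw [h2.2]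
  exact hasSum_congr' h1 (fun k => by rw [integral_eps_kernel hb k hε]) rfl

lemma integrable_majorant (hs : Summable fun k => ‖cfs k‖) (hc : Continuous θ)
    (hθ : ∀ x : ℝ, HasSum (fun k : ℤ => cfs k * cexp (sk b k * x)) (θ x : ℂ))
    (hpos : ∀ x, 0 < θ x)
    (hφ : ∀ r : ℝ, 0 < r → φ (Set.Ioi r) = ENNReal.ofReal (r ^ (-1 : ℝ) * θ (Real.log r)))
    (hφ0 : φ (Set.Iic 0) = 0) : Integrable (fun y => (1 - Real.exp (-y)) ^ 2) φ := by
  have hd : ∀ y : ℝ, HasDerivAt (fun y => (1 - Real.exp (-y)) ^ 2)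
      (2 * (1 - Real.exp (-y)) * Real.exp (-y)) y := by
    intro y
    have h3 : HasDerivAt (fun y : ℝ => Real.exp (-y)) (Real.exp (-y) * -1) y :=
      ((hasDerivAt_id y).neg).exp
    refine ((h3.const_sub 1).pow 2).congr_deriv ?_
    simp
  refine (integral_layer hpos hφ hφ0 hd (by fun_prop) (by simp) ?_).1
  refine integrableOn_theta_mul hs hc hθ (integrableOn_ofReal_iff.1 ?_)
  refine ((integrable_gammaDiff (s := 0) (r := 2) rfl (by norm_num)).const_mul (-2)).congr
    (Eventually.of_forall fun y => ?_)
  have e : cexp (-(2 * (y : ℂ))) = cexp (-y) * cexp (-y) := by rw [← Complex.exp_add]; ring_nf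
  simp only [e]
  push_cast
  ring

/-- The compensator `sin y - (1 - e^{-y})` integrated against `φ`, as the limit `ε → 0` of
`hasSum_Feps`. The coefficients `Γ(s_k) (cos (π s_k / 2) - 1)` are the source of the weights of `f'`
in the fractional difference. -/
lemma hasSum_compensator (hb : 0 < b) (hs : Summable fun k => ‖cfs k‖) (hc : Continuous θ)
    (hθ : ∀ x : ℝ, HasSum (fun k : ℤ => cfs k * cexp (sk b k * x)) (θ x : ℂ))
    (hpos : ∀ x, 0 < θ x)
    (hφ : ∀ r : ℝ, 0 < r → φ (Set.Ioi r) = ENNReal.ofReal (r ^ (-1 : ℝ) * θ (Real.log r)))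
    (hφ0 : φ (Set.Iic 0) = 0) :
    Integrable (Feps 0) φ ∧
      HasSum (fun k : ℤ => cfs k * Wk b k) ((∫ y, Feps 0 y ∂φ : ℝ) : ℂ) := by
  have hmaj := (integrable_majorant hs hc hθ hpos hφ hφ0).const_mul 16
  have h0 : ∀ᵐ y ∂φ, (0 : ℝ) < y := by
    filter_upwards [measure_eq_zero_iff_ae_notMem.1 hφ0] with y hy
    simpa using hy
  have hcont : ∀ ε, Continuous (Feps ε) := fun ε => by
    unfold Feps; fun_prop
  have hi0 : Integrable (Feps 0) φ := by
    refine hmaj.mono' (hcont 0).aestronglyMeasurable ?_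
    filter_upwards [h0] with y hy
    exact abs_Feps_le le_rfl zero_le_one hy
  refine ⟨hi0, ?_⟩
  obtain ⟨C, hC, -, hV⟩ := exists_Vk_bound hb
  have hsmall : ∀ᶠ ε : ℝ in nhdsWithin 0 (Ioi 0), 0 < ε ∧ ε ≤ 1 :=
    (eventually_mem_nhdsWithin).and
      (nhdsWithin_le_nhds (eventually_le_nhds (zero_lt_one)))
  -- convergence of the integrals
  have hL : Tendsto (fun ε => ((∫ y, Feps ε y ∂φ : ℝ) : ℂ)) (nhdsWithin 0 (Ioi 0))
      (nhds ((∫ y, Feps 0 y ∂φ : ℝ) : ℂ)) := by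
    refine (Complex.continuous_ofReal.tendsto _).comp ?_
    refine tendsto_integral_filter_of_dominated_convergence
      (fun y => 16 * (1 - Real.exp (-y)) ^ 2)
      (Eventually.of_forall fun ε => (hcont ε).aestronglyMeasurable) ?_ hmaj ?_
    · filter_upwards [hsmall] with ε hε
      filter_upwards [h0] with y hy
      exact abs_Feps_le hε.1.le hε.2 hy
    · refine Eventually.of_forall fun y => ?_
      have : Continuous fun ε => Feps ε y := by
        unfold Feps
        have : ∀ ε : ℝ, 1 + ε ^ 2 ≠ 0 := fun ε => by positivity
        fun_prop (disch := assumption)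
      exact (this.tendsto 0).mono_left nhdsWithin_le_nhds
  -- convergence of the coefficients
  have hA : ∀ k, Tendsto (fun ε : ℝ => (Vk b k (ε - Complex.I) + Vk b k (ε + Complex.I)) / 2)
      (nhdsWithin 0 (Ioi 0)) (nhds (Wk b k)) := by
    intro k
    have c1 : ContinuousAt (Vk b k) (((0 : ℝ) : ℂ) - Complex.I) :=
      continuousAt_Vk k (Or.inr (by simp))
    have c2 : ContinuousAt (Vk b k) (((0 : ℝ) : ℂ) + Complex.I) :=
      continuousAt_Vk k (Or.inr (by simp))
    have d1 : ContinuousAt (fun ε : ℝ => (ε : ℂ) - Complex.I) 0 := by fun_prop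
    have d2 : ContinuousAt (fun ε : ℝ => (ε : ℂ) + Complex.I) 0 := by fun_prop
    have e1 : ContinuousAt (fun ε : ℝ => Vk b k (ε - Complex.I)) 0 :=
      ContinuousAt.comp (g := Vk b k) c1 d1
    have e2 : ContinuousAt (fun ε : ℝ => Vk b k (ε + Complex.I)) 0 :=
      ContinuousAt.comp (g := Vk b k) c2 d2
    have := ((e1.add e2).div_const 2).tendsto
    rw [← avg_Vk_I (b := b) k]
    simpa using this.mono_left nhdsWithin_le_nhds
  have hb0 : ∀ᶠ ε : ℝ in nhdsWithin 0 (Ioi 0),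
      ‖(Vk b 0 (ε - Complex.I) + Vk b 0 (ε + Complex.I)) / 2‖ ≤ 1 := by
    have := (hA 0).norm
    rw [Wk, if_pos rfl, norm_zero] at this
    exact this.eventually (eventually_le_nhds zero_lt_one)
  have hbound : ∀ᶠ ε : ℝ in nhdsWithin 0 (Ioi 0), ∀ k,
      ‖(Vk b k (ε - Complex.I) + Vk b k (ε + Complex.I)) / 2‖ ≤ 2 * C + 1 := by
    filter_upwards [hb0, hsmall] with ε h0 hε k
    by_cases hk : k = 0
    · subst hk; linarith
    · have n1 : (ε : ℂ) - Complex.I ≠ 0 := fun h => by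
        have := congrArg Complex.re h; simp at this; linarith
      have n2 : (ε : ℂ) + Complex.I ≠ 0 := fun h => by
        have := congrArg Complex.re h; simp at this; linarith
      have v1 := hV k hk (ε - Complex.I) (by simpa using hε.1.le) n1
      have v2 := hV k hk (ε + Complex.I) (by simpa using hε.1.le) n2
      rw [norm_div, Complex.norm_ofNat]
      have := norm_add_le (Vk b k (ε - Complex.I)) (Vk b k (ε + Complex.I))
      linarith
  have hT := tendsto_tsum_of_dominated_convergence (hs.mul_right (2 * C + 1))
    (fun k => (hA k).const_mul (cfs k)) (hbound.mono fun ε h k => by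
      rw [norm_mul]; exact mul_le_mul_of_nonneg_left (h k) (norm_nonneg _))
  have hW : ∀ k, ‖Wk b k‖ ≤ 2 * C + 1 := fun k =>
    le_of_tendsto (hA k).norm (hbound.mono fun ε h => h k)
  have hsum : Summable fun k => cfs k * Wk b k :=
    Summable.of_norm_bounded (hs.mul_right (2 * C + 1)) fun k => by
      rw [norm_mul]; exact mul_le_mul_of_nonneg_left (hW k) (norm_nonneg _)
  have hL' := hL.congr' (hsmall.mono fun ε hε =>
    (hasSum_Feps hb hs hc hθ hpos hφ hφ0 hε.1).tsum_eq.symm)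
  exact (tendsto_nhds_unique hT hL') ▸ hsum.hasSum

end K

/-! ### Passage to the limit in the Poisson averages -/

section limit

variable {b : ℝ} {θ : ℝ → ℝ} {cfs : ℤ → ℂ}

/-- An integrable majorant of `|Rker (D h) h y| / y`, uniform in `h ∈ (0, 1]`. -/
def Maj (A C β y : ℝ) : ℝ := if y ≤ 1 then A else C * Real.exp (-y) + C * y ^ (-β - 1)

lemma integrableOn_Maj (A C : ℝ) {β : ℝ} (hβ : 0 < β) : IntegrableOn (Maj A C β) (Ioi 0) := by
  rw [← Ioc_union_Ioi_eq_Ioi (zero_le_one (α := ℝ))]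
  refine IntegrableOn.union ?_ ?_
  · have : IntegrableOn (fun _ : ℝ => A) (Ioc 0 1) := integrableOn_const (by simp)
    exact this.congr_fun (fun y hy => by simp [Maj, hy.2]) measurableSet_Ioc
  · have h1 : IntegrableOn (fun y : ℝ => C * Real.exp (-y) + C * y ^ (-β - 1)) (Ioi 1) :=
      ((integrableOn_exp_neg_Ioi 1).const_mul C).add
        ((integrableOn_Ioi_rpow_of_lt (by linarith) zero_lt_one).const_mul C)
    refine h1.congr_fun (fun y hy => ?_) measurableSet_Ioi
    have : ¬ y ≤ 1 := not_le.2 hy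
    simp [Maj, this]

lemma abs_Rker_le_Maj {D : ℕ → ℝ} {C L β h y : ℝ} (hβ : 0 < β) (hβ1 : β ≤ 1) (hC : 0 ≤ C)
    (hDb : ∀ j, |D j| ≤ C * (1 + j * h) ^ (-β)) (hDL : ∀ j, |D j - D 0| ≤ L * (j * h))
    (hh : 0 < h) (hh1 : h ≤ 1) (hy : 0 < y) : |y⁻¹ * Rker D h y| ≤ Maj (C + L) C β y := by
  have hDC : ∀ j, |D j| ≤ C := fun j => by
    refine (hDb j).trans (mul_le_of_le_one_right hC ?_)
    exact Real.rpow_le_one_of_one_le_of_nonpos (by nlinarith [mul_nonneg (Nat.cast_nonneg (α := ℝ) j) hh.le])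
      (by linarith)
  rw [abs_mul, abs_of_pos (inv_pos.2 hy), inv_mul_le_iff₀ hy]
  unfold Maj
  split_ifs with h1
  · refine (abs_Rker_le_near hh hy.le hDC hDL).trans ?_
    rw [mul_comm]
    exact mul_le_mul_of_nonneg_left (by linarith [hDC 0]) hy.le
  · have h1 : 1 < y := not_le.1 h1
    refine (abs_Rker_le_far hh hh1 hy hβ hβ1 hC hDb).trans ?_
    have e : y * y ^ (-β - 1) = y ^ (-β) := by
      rw [Real.rpow_sub_one hy.ne']; field_simp
    have : 0 ≤ C * Real.exp (-y) := by positivity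
    calc _ ≤ y * (C * Real.exp (-y)) + C * (y * y ^ (-β - 1)) := by rw [e]; nlinarith
      _ = _ := by ring

lemma integrableOn_Rker {D : ℕ → ℝ} {C L β h : ℝ} (hβ : 0 < β) (hβ1 : β ≤ 1) (hC : 0 ≤ C)
    (hDb : ∀ j, |D j| ≤ C * (1 + j * h) ^ (-β)) (hDL : ∀ j, |D j - D 0| ≤ L * (j * h))
    (hh : 0 < h) (hh1 : h ≤ 1) : IntegrableOn (fun y => y⁻¹ * Rker D h y) (Ioi 0) := by
  refine (integrableOn_Maj (C + L) C hβ).mono'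
    (measurable_inv.mul (measurable_Rker D h)).aestronglyMeasurable ?_
  exact (ae_restrict_iff' measurableSet_Ioi).2 (Eventually.of_forall fun y hy =>
    abs_Rker_le_Maj hβ hβ1 hC hDb hDL hh hh1 hy)

/-- Dominated convergence for the Poisson averages. -/
lemma tendsto_integral_Rker (hs : Summable fun k => ‖cfs k‖) (hc : Continuous θ)
    (hθ : ∀ x : ℝ, HasSum (fun k : ℤ => cfs k * cexp (sk b k * x)) (θ x : ℂ))
    {D : ℝ → ℕ → ℝ} {g : ℝ → ℝ} {C L B β : ℝ} (hβ : 0 < β) (hβ1 : β ≤ 1) (hC : 0 ≤ C)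
    (hDb : ∀ h > 0, ∀ j, |D h j| ≤ C * (1 + j * h) ^ (-β))
    (hD0 : ∀ h > 0, D h 0 = g 0)
    (hDL : ∀ h > 0, ∀ j, |D h j - D h 0| ≤ L * (j * h))
    (hDg : ∀ h > 0, ∀ j : ℕ, |D h j - g (j * h)| ≤ B * h)
    (hg : ∀ u v, |g u - g v| ≤ B * |u - v|) (hgc : Continuous g) :
    IntegrableOn (fun y => y⁻¹ * (g 0 * Real.exp (-y) - g y)) (Ioi 0) ∧
    Tendsto (fun h => ∫ y in Ioi 0, θ (Real.log y) / y * Rker (D h) h y) (nhdsWithin 0 (Ioi 0))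
      (nhds (∫ y in Ioi 0, θ (Real.log y) / y * (g 0 * Real.exp (-y) - g y))) := by
  have hDC : ∀ h > 0, ∀ j, |D h j| ≤ C := fun h hh j => by
    refine (hDb h hh j).trans (mul_le_of_le_one_right hC ?_)
    exact Real.rpow_le_one_of_one_le_of_nonpos
      (by nlinarith [mul_nonneg (Nat.cast_nonneg (α := ℝ) j) (le_of_lt hh)]) (by linarith)
  have hsmall : ∀ᶠ h : ℝ in nhdsWithin 0 (Ioi 0), 0 < h ∧ h ≤ 1 :=
    (eventually_mem_nhdsWithin).and
      (nhdsWithin_le_nhds (eventually_le_nhds (zero_lt_one)))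
  have hpt : ∀ y : ℝ, 0 < y → Tendsto (fun h => y⁻¹ * Rker (D h) h y) (nhdsWithin 0 (Ioi 0))
      (nhds (y⁻¹ * (g 0 * Real.exp (-y) - g y))) := fun y hy =>
    (tendsto_Rker hy hDC hD0 hDg hg).const_mul _
  have hlim : ∀ y : ℝ, 0 < y → |y⁻¹ * (g 0 * Real.exp (-y) - g y)| ≤ Maj (C + L) C β y :=
    fun y hy => le_of_tendsto (hpt y hy).abs (hsmall.mono fun h hh =>
      abs_Rker_le_Maj hβ hβ1 hC (hDb h hh.1) (hDL h hh.1) hh.1 hh.2 hy)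
  refine ⟨?_, ?_⟩
  · refine (integrableOn_Maj (C + L) C hβ).mono' ?_ ?_
    · exact (measurable_inv.mul
        ((by fun_prop : Continuous fun y => g 0 * Real.exp (-y) - g y).measurable)).aestronglyMeasurable
    · exact (ae_restrict_iff' measurableSet_Ioi).2 (Eventually.of_forall fun y hy => hlim y hy)
  · have hθm : Measurable fun y : ℝ => θ (Real.log y) := hc.measurable.comp Real.measurable_log
    refine tendsto_integral_filter_of_dominated_convergence
      (fun y => (∑' k, ‖cfs k‖) * Maj (C + L) C β y) ?_ ?_ ?_ ?_
    · exact Eventually.of_forall fun h =>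
        ((hθm.div measurable_id).mul (measurable_Rker _ _)).aestronglyMeasurable
    · filter_upwards [hsmall] with h hh
      refine (ae_restrict_iff' measurableSet_Ioi).2 (Eventually.of_forall fun y hy => ?_)
      rw [div_eq_mul_inv, mul_assoc, norm_mul]
      exact mul_le_mul (abs_theta_le hs hθ _)
        (abs_Rker_le_Maj hβ hβ1 hC (hDb h hh.1) (hDL h hh.1) hh.1 hh.2 hy) (norm_nonneg _)
        (tsum_nonneg fun _ => norm_nonneg _)
    · exact (integrableOn_Maj (C + L) C hβ).const_mul _
    · refine (ae_restrict_iff' measurableSet_Ioi).2 (Eventually.of_forall fun y hy => ?_)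
      simp only [div_eq_mul_inv, mul_assoc]
      exact (hpt y hy).const_mul _

end limit

/-! ### Mellin transform of the Poisson weights -/

section gammaPoisson

/-- The ratio `Γ(s + j) / j!`. -/
def Gam (s : ℂ) (j : ℕ) : ℂ := Complex.Gamma (s + j) / (j.factorial : ℂ)

lemma cpow_mul_pois (s : ℂ) {h y : ℝ} (hh : 0 < h) (hy : 0 < y) (j : ℕ) :
    (y : ℂ) ^ (s - 1) * (pois (y / h) (j + 1) : ℂ) =
      ((y : ℂ) ^ (s + (j + 1 : ℕ) - 1) * cexp (-(((1 / h : ℝ) : ℂ) * y))) *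
        (1 / ((h : ℂ) ^ (j + 1) * ((j + 1).factorial : ℂ))) := by
  have hy0 : (y : ℂ) ≠ 0 := by exact_mod_cast hy.ne'
  have hh0 : (h : ℂ) ≠ 0 := by exact_mod_cast hh.ne'
  have hf : ((j + 1).factorial : ℂ) ≠ 0 := by exact_mod_cast (Nat.factorial_pos _).ne'
  have e1 : (y : ℂ) ^ (s + (j + 1 : ℕ) - 1) = (y : ℂ) ^ (s - 1) * (y : ℂ) ^ (j + 1) := by
    rw [← Complex.cpow_natCast, ← Complex.cpow_add _ _ hy0]; ring_nf
  have e2 : cexp (-(((1 / h : ℝ) : ℂ) * y)) = cexp (-(y / h)) := by push_cast; ring_nf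
  rw [e1, e2, pois]
  push_cast
  rw [div_pow]
  field_simp

lemma pois_eq_rpow {h y : ℝ} (hh : 0 < h) (hy : 0 < y) (j : ℕ) :
    y⁻¹ * pois (y / h) (j + 1) =
      (y ^ (((j : ℝ) + 1) - 1) * Real.exp (-((1 / h) * y))) *
        (1 / (h ^ (j + 1) * ((j + 1).factorial : ℝ))) := by
  have e1 : y ^ (((j : ℝ) + 1) - 1) = y ^ j := by rw [add_sub_cancel_right, Real.rpow_natCast]
  have e2 : Real.exp (-((1 / h) * y)) = Real.exp (-(y / h)) := by ring_nf
  have hf : ((j + 1).factorial : ℝ) ≠ 0 := by positivity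
  rw [e1, e2, pois, div_pow]
  field_simp
  ring

lemma norm_cpow_mul_pois {s : ℂ} (hs : s.re = 0) {h y : ℝ} (hh : 0 < h) (hy : 0 < y) (j : ℕ) :
    ‖(y : ℂ) ^ (s - 1) * (pois (y / h) (j + 1) : ℂ)‖ = y⁻¹ * pois (y / h) (j + 1) := by
  rw [norm_mul, Complex.norm_cpow_eq_rpow_re_of_pos hy, Complex.norm_real,
    Real.norm_of_nonneg (pois_nonneg (by positivity) _)]
  simp [hs, Real.rpow_neg_one]

lemma integrable_inv_mul_pois {h : ℝ} (hh : 0 < h) (j : ℕ) :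
    IntegrableOn (fun y : ℝ => y⁻¹ * pois (y / h) (j + 1)) (Ioi 0) := by
  have h1 := (integrableOn_rpow_mul_exp_neg_mul_rpow (p := 1) (s := j) (b := 1 / h)
    (by have := Nat.cast_nonneg (α := ℝ) j; linarith) zero_lt_one (by positivity)).mul_const
    (1 / (h ^ (j + 1) * ((j + 1).factorial : ℝ)))
  refine IntegrableOn.congr_fun h1 (fun y hy => ?_) measurableSet_Ioi
  rw [pois_eq_rpow hh hy]
  simp

lemma integral_inv_mul_pois {h : ℝ} (hh : 0 < h) (j : ℕ) :
    ∫ y : ℝ in Ioi 0, y⁻¹ * pois (y / h) (j + 1) = 1 / ((j : ℝ) + 1) := by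
  rw [setIntegral_congr_fun measurableSet_Ioi (fun y hy => pois_eq_rpow hh hy j),
    integral_mul_const, Real.integral_rpow_mul_exp_neg_mul_Ioi (by positivity) (by positivity),
    Real.Gamma_nat_eq_factorial, one_div_one_div, Nat.factorial_succ]
  have : ((j : ℝ) + 1) = ((j + 1 : ℕ) : ℝ) := by push_cast; ring
  rw [this, Real.rpow_natCast]
  have hf : (j.factorial : ℝ) ≠ 0 := by positivity
  push_cast
  field_simp

lemma integrable_cpow_mul_pois {s : ℂ} (hs : s.re = 0) {h : ℝ} (hh : 0 < h) (j : ℕ) :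
    IntegrableOn (fun y : ℝ => (y : ℂ) ^ (s - 1) * (pois (y / h) (j + 1) : ℂ)) (Ioi 0) := by
  refine Integrable.mono' (integrable_inv_mul_pois hh j) ?_ ?_
  · refine ((continuousOn_cpow_Ioi _).aestronglyMeasurable measurableSet_Ioi).mul ?_
    have : Continuous fun y : ℝ => (pois (y / h) (j + 1) : ℂ) := by unfold pois; fun_prop
    exact this.aestronglyMeasurable
  · exact (ae_restrict_iff' measurableSet_Ioi).2 (Eventually.of_forall fun y hy =>
      (norm_cpow_mul_pois hs hh hy j).le)

/-- Mellin transform of a Poisson weight on the imaginary axis. -/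
lemma integral_cpow_mul_pois {s : ℂ} (hs : s.re = 0) {h : ℝ} (hh : 0 < h) (j : ℕ) :
    ∫ y : ℝ in Ioi 0, (y : ℂ) ^ (s - 1) * (pois (y / h) (j + 1) : ℂ) =
      (h : ℂ) ^ s * Gam s (j + 1) := by
  have hh0 : (h : ℂ) ≠ 0 := by exact_mod_cast hh.ne'
  rw [setIntegral_congr_fun measurableSet_Ioi (fun y hy => cpow_mul_pois s hh hy j),
    integral_mul_const, Complex.integral_cpow_mul_exp_neg_mul_Ioi
      (by simp [hs]; positivity) (by positivity)]
  have e : (1 / ((1 / h : ℝ) : ℂ)) = h := by push_cast; field_simp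
  rw [e, Complex.cpow_add _ _ hh0, Complex.cpow_natCast, Gam]
  have hf : ((j + 1).factorial : ℂ) ≠ 0 := by exact_mod_cast (Nat.factorial_pos _).ne'
  field_simp

/-- Obtained by taking absolute values in `integral_cpow_mul_pois` with `h = 1`. -/
lemma norm_Gam_succ_le {s : ℂ} (hs : s.re = 0) (j : ℕ) : ‖Gam s (j + 1)‖ ≤ 1 / ((j : ℝ) + 1) := by
  have h1 := integral_cpow_mul_pois hs zero_lt_one j
  rw [Complex.ofReal_one, Complex.one_cpow, one_mul] at h1
  rw [← h1, ← integral_inv_mul_pois zero_lt_one j]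
  refine (norm_integral_le_integral_norm _).trans (le_of_eq ?_)
  exact setIntegral_congr_fun measurableSet_Ioi fun y hy => norm_cpow_mul_pois hs zero_lt_one hy j

lemma Gam_zero_succ (j : ℕ) : Gam 0 (j + 1) = 1 / ((j : ℂ) + 1) := by
  rw [Gam, zero_add, Nat.cast_succ, Complex.Gamma_nat_eq_factorial, Nat.factorial_succ]
  have hf : (j.factorial : ℂ) ≠ 0 := by exact_mod_cast (Nat.factorial_pos _).ne'
  have : (j : ℂ) + 1 ≠ 0 := by exact_mod_cast j.succ_ne_zero
  push_cast
  field_simp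

/-- Mellin transform of `Rker` on the imaginary axis: the Poisson weights turn into the coefficients
`Γ(s + j) / j!`. -/
lemma integral_cpow_mul_Rker {s : ℂ} (hs : s.re = 0) {h : ℝ} (hh : 0 < h) {D : ℕ → ℝ} {C : ℝ}
    (hDb : ∀ j, |D j| ≤ C) (hD : Summable fun j : ℕ => 1 / ((j : ℝ) + 1) * |D (j + 1)|) :
    ∫ y : ℝ in Ioi 0, (y : ℂ) ^ (s - 1) * (Rker D h y : ℂ) =
      -(D 0 * ∫ y : ℝ in Ioi 0, (y : ℂ) ^ (s - 1) * (cexp (-(((1 / h : ℝ) : ℂ) * y)) - cexp (-y)))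
      - (h : ℂ) ^ s * ∑' j : ℕ, Gam s (j + 1) * D (j + 1) := by
  have hr : 0 < (((1 / h : ℝ) : ℂ)).re := by rw [Complex.ofReal_re]; positivity
  set P : ℝ → ℂ := fun y => (y : ℂ) ^ (s - 1) * (cexp (-(((1 / h : ℝ) : ℂ) * y)) - cexp (-y)) with hP
  have hPi : IntegrableOn P (Ioi 0) := integrable_gammaDiff hs hr
  -- the weight of `D 0` is not integrable against `y⁻¹` and is paired with the compensator `e^{-y}`
  let Φ : ℕ → ℝ → ℂ := fun j y =>
    Nat.casesOn j (-(D 0 * P y))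
      (fun i => -(((y : ℂ) ^ (s - 1) * (pois (y / h) (i + 1) : ℂ)) * D (i + 1)))
  have hΦ0 : Φ 0 = fun y => -(D 0 * P y) := rfl
  have hΦi : ∀ j, Integrable (Φ j) (volume.restrict (Ioi 0)) := by
    intro j
    cases j with
    | zero => exact (hPi.const_mul _).neg
    | succ i => exact ((integrable_cpow_mul_pois hs hh i).mul_const _).neg
  have hsum : Summable fun j => ∫ y : ℝ in Ioi 0, ‖Φ j y‖ := by
    rw [← summable_nat_add_iff 1]
    refine hD.congr fun i => ?_
    rw [← integral_inv_mul_pois hh i, ← integral_mul_const]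
    refine setIntegral_congr_fun measurableSet_Ioi fun y hy => ?_
    simp only [Φ]
    rw [norm_neg, norm_mul, norm_cpow_mul_pois hs hh hy, Complex.norm_real, Real.norm_eq_abs]
  have H := hasSum_integral_of_summable_integral_norm hΦi hsum
  have hval : ∫ y : ℝ in Ioi 0, (∑' j, Φ j y) =
      ∫ y : ℝ in Ioi 0, (y : ℂ) ^ (s - 1) * (Rker D h y : ℂ) := by
    refine setIntegral_congr_fun measurableSet_Ioi fun y hy => ?_
    have hy : (0 : ℝ) < y := hy
    have hq := (summable_pois_mul (l := y / h) (by positivity) hDb).hasSum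
    have hq1 : HasSum (fun j => ((pois (y / h) (j + 1) * D (j + 1) : ℝ) : ℂ))
        ((∑' j, pois (y / h) j * D j - pois (y / h) 0 * D 0 : ℝ) : ℂ) := by
      refine Complex.hasSum_ofReal.2 ?_
      have := (hasSum_nat_add_iff' 1).2 hq
      simpa using this
    refine ((hasSum_nat_add_iff' 1).1 (hasSum_congr' (hq1.mul_left (-(y : ℂ) ^ (s - 1)))
      (fun j => ?_) ?_)).tsum_eq
    · simp only [Φ]; push_cast; ring
    · simp only [Finset.sum_range_one, hΦ0, hP, Rker]
      have e0 : pois (y / h) 0 = Real.exp (-(1 / h * y)) := by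
        simp [pois]; ring
      rw [e0]
      push_cast
      ring
  rw [hval] at H
  have H1 := (hasSum_nat_add_iff' 1).2 H
  rw [Finset.sum_range_one] at H1
  have H2 : HasSum (fun j => -((h : ℂ) ^ s * (Gam s (j + 1) * D (j + 1))))
      ((∫ y : ℝ in Ioi 0, (y : ℂ) ^ (s - 1) * (Rker D h y : ℂ)) - ∫ y : ℝ in Ioi 0, Φ 0 y) := by
    refine hasSum_congr' H1 (fun j => ?_) rfl
    simp only [Φ]
    rw [integral_neg, integral_mul_const, integral_cpow_mul_pois hs hh]
    ring
  have H3 := H2.tsum_eq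
  rw [tsum_neg, tsum_mul_left] at H3
  have H4 : ∫ y : ℝ in Ioi 0, Φ 0 y = -(D 0 * ∫ y : ℝ in Ioi 0, P y) := by
    rw [hΦ0, integral_neg, integral_const_mul]
  rw [H4] at H3
  linear_combination -H3

lemma integral_cpow_mul_Rker_ne {s : ℂ} (hs : s.re = 0) (hs0 : s ≠ 0) {h : ℝ} (hh : 0 < h)
    {D : ℕ → ℝ} {C : ℝ}
    (hDb : ∀ j, |D j| ≤ C) (hD : Summable fun j : ℕ => 1 / ((j : ℝ) + 1) * |D (j + 1)|) :
    ∫ y : ℝ in Ioi 0, (y : ℂ) ^ (s - 1) * (Rker D h y : ℂ) =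
      D 0 * Complex.Gamma s * (1 - (h : ℂ) ^ s)
      - (h : ℂ) ^ s * ∑' j : ℕ, Gam s (j + 1) * D (j + 1) := by
  have hr : 0 < (((1 / h : ℝ) : ℂ)).re := by rw [Complex.ofReal_re]; positivity
  rw [integral_cpow_mul_Rker hs hh hDb hD, integral_gammaDiff_of_ne hs hs0 hr]
  have : (((1 / h : ℝ) : ℂ)) ^ (-s) = (h : ℂ) ^ s := by
    rw [one_div, Complex.ofReal_inv, Complex.inv_cpow, Complex.cpow_neg, inv_inv]
    rw [Complex.arg_ofReal_of_nonneg hh.le]; exact Real.pi_pos.ne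
  rw [this]; ring

lemma integral_cpow_mul_Rker_zero {h : ℝ} (hh : 0 < h) {D : ℕ → ℝ} {C : ℝ}
    (hDb : ∀ j, |D j| ≤ C) (hD : Summable fun j : ℕ => 1 / ((j : ℝ) + 1) * |D (j + 1)|) :
    ∫ y : ℝ in Ioi 0, (y : ℂ) ^ ((0 : ℂ) - 1) * (Rker D h y : ℂ) =
      ((D 0 * Real.log (1 / h) - ∑' j : ℕ, 1 / ((j : ℝ) + 1) * D (j + 1) : ℝ) : ℂ) := by
  have hr : 0 < (((1 / h : ℝ) : ℂ)).re := by rw [Complex.ofReal_re]; positivity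
  rw [integral_cpow_mul_Rker rfl hh hDb hD, integral_gammaDiff_zero hr, Complex.cpow_zero,
    ← Complex.ofReal_log (by positivity)]
  simp_rw [Gam_zero_succ]
  push_cast
  ring

end gammaPoisson

/-! ### Binomial weights and error terms -/

section binomial

lemma gbinom_succ (z : ℂ) (j : ℕ) :
    gbinom z (j + 1) * ((j : ℂ) + 1) = gbinom z j * (z - j) := by
  have hf : (j.factorial : ℂ) ≠ 0 := by exact_mod_cast (Nat.factorial_pos _).ne'
  have hj : (j : ℂ) + 1 ≠ 0 := by exact_mod_cast j.succ_ne_zero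
  rw [gbinom, gbinom, Finset.prod_range_succ, Nat.factorial_succ]
  push_cast
  field_simp

lemma gbinom_add_one_succ (z : ℂ) (j : ℕ) :
    gbinom (1 + z) (j + 1) * ((j : ℂ) + 1) = gbinom z j * (1 + z) := by
  have hf : (j.factorial : ℂ) ≠ 0 := by exact_mod_cast (Nat.factorial_pos _).ne'
  have hj : (j : ℂ) + 1 ≠ 0 := by exact_mod_cast j.succ_ne_zero
  rw [gbinom, gbinom, Finset.prod_range_succ', Nat.factorial_succ]
  have : ∀ i : ℕ, 1 + z - ((i + 1 : ℕ) : ℂ) = z - i := fun i => by push_cast; ring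
  simp_rw [this]
  push_cast
  field_simp
  ring

lemma imag_add_nat_ne_zero {s : ℂ} (hs : s.re = 0) (hs0 : s ≠ 0) (j : ℕ) : s + j ≠ 0 := by
  intro h
  have h1 := congrArg Complex.re h
  simp only [Complex.add_re, hs, Complex.natCast_re, zero_add, Complex.zero_re] at h1
  rw [Nat.cast_eq_zero] at h1
  exact hs0 (by simpa [h1] using h)

lemma Gamma_mul_gbinom {s : ℂ} (hs : s.re = 0) (hs0 : s ≠ 0) (j : ℕ) :
    Complex.Gamma s * (gbinom (-s) j * (-1) ^ j) = Gam s j := by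
  induction j with
  | zero => simp [gbinom, Gam]
  | succ j ih =>
    have hj : (j : ℂ) + 1 ≠ 0 := by exact_mod_cast j.succ_ne_zero
    have hf : (j.factorial : ℂ) ≠ 0 := by exact_mod_cast (Nat.factorial_pos _).ne'
    have h1 := gbinom_succ (-s) j
    have h2 := Complex.Gamma_add_one _ (imag_add_nat_ne_zero hs hs0 j)
    have h3 : Gam s (j + 1) * ((j : ℂ) + 1) = Gam s j * (s + j) := by
      rw [Gam, Gam, Nat.factorial_succ]
      push_cast
      rw [← add_assoc, h2]
      field_simp
    apply mul_right_cancel₀ hj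
    rw [h3, ← ih, pow_succ]
    linear_combination (Complex.Gamma s * (-1) ^ j * (-1)) * h1

/-- The weights of the fractional difference of order `1 - s`, in terms of `Γ(s + j) / j!`. -/
lemma Gamma_mul_gbinom_succ {s : ℂ} (hs : s.re = 0) (hs0 : s ≠ 0) (j : ℕ) :
    Complex.Gamma s * (gbinom (1 - s) (j + 1) * (-1) ^ (j + 1)) =
      -((1 - s) / ((j : ℂ) + 1) * Gam s j) := by
  have hj : (j : ℂ) + 1 ≠ 0 := by exact_mod_cast j.succ_ne_zero
  have h1 := gbinom_add_one_succ (-s) j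
  rw [← sub_eq_add_neg] at h1
  rw [← Gamma_mul_gbinom hs hs0, pow_succ]
  field_simp
  linear_combination (-Complex.Gamma s) * h1

/-- The same weights as first differences of `Γ(s + j) / j!`. -/
lemma Gamma_mul_gbinom_succ' {s : ℂ} (hs : s.re = 0) (hs0 : s ≠ 0) (j : ℕ) :
    Complex.Gamma s * (gbinom (1 - s) (j + 1) * (-1) ^ (j + 1)) = Gam s (j + 1) - Gam s j := by
  have hj : (j : ℂ) + 1 ≠ 0 := by exact_mod_cast j.succ_ne_zero
  rw [Gamma_mul_gbinom_succ hs hs0, ← Gamma_mul_gbinom hs hs0, ← Gamma_mul_gbinom hs hs0, pow_succ]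
  have h1 := gbinom_succ (-s) j
  field_simp
  linear_combination (Complex.Gamma s) * h1

lemma sum_by_parts {s : ℂ} (hs : s.re = 0) (hs0 : s ≠ 0) (u : ℕ → ℂ) (n : ℕ) :
    ∑ j ∈ Finset.range (n + 1), Complex.Gamma s * (gbinom (1 - s) j * (-1) ^ j) * u j =
      ∑ j ∈ Finset.range n, Gam s j * (u j - u (j + 1)) + Gam s n * u n := by
  induction n with
  | zero => simp [gbinom, Gam]
  | succ n ih =>
    rw [Finset.sum_range_succ, ih, Gamma_mul_gbinom_succ' hs hs0, Finset.sum_range_succ]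
    ring

/-- Summation by parts turns the fractional difference of order `1 - s` into a series of first
differences with weights `Γ(s + j) / j!`. -/
lemma Gamma_mul_tsum_gbinom {s : ℂ} (hs : s.re = 0) (hs0 : s ≠ 0) {u : ℕ → ℂ} {M : ℝ}
    (hu : ∀ j, ‖u j‖ ≤ M) (hsum : Summable fun j => Gam s j * (u j - u (j + 1))) :
    Complex.Gamma s * ∑' j : ℕ, gbinom (1 - s) j * (-1) ^ j * u j =
      ∑' j : ℕ, Gam s j * (u j - u (j + 1)) := by
  have hM : 0 ≤ M := (norm_nonneg _).trans (hu 0)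
  have hS : Summable fun j => Complex.Gamma s * (gbinom (1 - s) j * (-1) ^ j) * u j := by
    rw [← summable_nat_add_iff 2]
    have h2 : Summable fun j : ℕ => ‖1 - s‖ * M * (1 / ((j : ℝ) + 1) ^ 2) := by
      refine Summable.mul_left _ ?_
      have := (summable_nat_add_iff 1).2 (Real.summable_one_div_nat_pow.2 one_lt_two)
      simpa using this
    refine Summable.of_norm_bounded h2 fun j => ?_
    rw [Gamma_mul_gbinom_succ hs hs0, norm_mul, norm_neg, norm_mul, norm_div]
    have e : ‖((j + 1 : ℕ) : ℂ) + 1‖ = (j : ℝ) + 2 := by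
      have : ((j + 1 : ℕ) : ℂ) + 1 = ((j + 2 : ℕ) : ℂ) := by push_cast; ring
      rw [this, Complex.norm_natCast]; push_cast; ring
    rw [e]
    have h3 := norm_Gam_succ_le hs j
    have hj := Nat.cast_nonneg (α := ℝ) j
    calc ‖1 - s‖ / ((j : ℝ) + 2) * ‖Gam s (j + 1)‖ * ‖u (j + 2)‖
        ≤ ‖1 - s‖ / ((j : ℝ) + 1) * (1 / ((j : ℝ) + 1)) * M := by
          gcongr
          · linarith
          · exact hu _
      _ = _ := by field_simp
  have h0 : Tendsto (fun n => Gam s n * u n) atTop (nhds 0) := by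
    rw [← tendsto_add_atTop_iff_nat 1]
    refine squeeze_zero_norm (fun n => ?_) (a := fun n : ℕ => 1 / ((n : ℝ) + 1) * M) ?_
    · rw [norm_mul]
      exact mul_le_mul (norm_Gam_succ_le hs n) (hu _) (norm_nonneg _) (by positivity)
    · simpa using (tendsto_one_div_add_atTop_nhds_zero_nat (𝕜 := ℝ)).mul_const M
  have h1 := (tendsto_add_atTop_iff_nat 1).2 hS.hasSum.tendsto_sum_nat
  have h2 := hsum.hasSum.tendsto_sum_nat.add h0
  rw [add_zero] at h2
  rw [tendsto_nhds_unique (h2.congr fun n => (sum_by_parts hs hs0 u n).symm) h1, ← tsum_mul_left]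
  exact tsum_congr fun j => by ring

end binomial

section errors

lemma summable_rpow_succ {p : ℝ} (hp : 1 < p) : Summable fun j : ℕ => ((j : ℝ) + 1) ^ (-p) := by
  have := (summable_nat_add_iff 1).2 (Real.summable_nat_rpow.2 (neg_lt_neg hp))
  simpa using this

lemma decay_rpow_le {h β : ℝ} (hh : 0 < h) (hβ : 0 < β) (j : ℕ) :
    (1 + ((j + 1 : ℕ) : ℝ) * h) ^ (-β) ≤ h ^ (-β) * ((j : ℝ) + 1) ^ (-β) := by
  rw [← Real.mul_rpow hh.le (by positivity)]
  refine Real.rpow_le_rpow_of_nonpos (by positivity) ?_ (by linarith)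
  push_cast; linarith

lemma inv_mul_rpow (j : ℕ) (β : ℝ) :
    1 / ((j : ℝ) + 1) * ((j : ℝ) + 1) ^ (-β) = ((j : ℝ) + 1) ^ (-(1 + β)) := by
  have : (0 : ℝ) < (j : ℝ) + 1 := by positivity
  rw [neg_add, Real.rpow_add this, Real.rpow_neg_one, one_div]

lemma summable_of_decay {v : ℕ → ℝ} {C h β : ℝ} (hh : 0 < h) (hβ : 0 < β) (hC : 0 ≤ C)
    (hv : ∀ j : ℕ, |v j| ≤ C * (1 + j * h) ^ (-β)) :
    Summable fun j : ℕ => 1 / ((j : ℝ) + 1) * |v (j + 1)| := by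
  refine Summable.of_nonneg_of_le (fun j => by positivity) (fun j => ?_)
    ((summable_rpow_succ (p := 1 + β) (by linarith)).mul_left (C * h ^ (-β)))
  rw [← inv_mul_rpow]
  calc 1 / ((j : ℝ) + 1) * |v (j + 1)| ≤ 1 / ((j : ℝ) + 1) * (C * (h ^ (-β) * ((j : ℝ) + 1) ^ (-β))) := by
        gcongr
        exact (hv _).trans (mul_le_mul_of_nonneg_left (decay_rpow_le hh hβ j) hC)
    _ = _ := by ring

/-- Interpolating the bounds `B h` and `2 C (j h) ^ (-β)` shows that replacing difference quotients
by derivatives changes the series by a positive power of `h`. -/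
lemma tendsto_quotient_error {D : ℝ → ℕ → ℝ} {g : ℝ → ℝ} {C B β : ℝ} (hβ : 0 < β) (hβ1 : β ≤ 1 / 2)
    (hC : 0 ≤ C) (hB : 0 ≤ B)
    (hDb : ∀ h > 0, ∀ j : ℕ, |D h j| ≤ C * (1 + j * h) ^ (-β))
    (hgb : ∀ h > 0, ∀ j : ℕ, |g (j * h)| ≤ C * (1 + j * h) ^ (-β))
    (hDg : ∀ h > 0, ∀ j : ℕ, |D h j - g (j * h)| ≤ B * h) :
    Tendsto (fun h : ℝ => ∑' j : ℕ, 1 / ((j : ℝ) + 1) * (D h (j + 1) - g ((j + 1 : ℕ) * h)))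
      (nhdsWithin 0 (Ioi 0)) (nhds 0) := by
  have hS := summable_rpow_succ (p := 1 + β / 2) (by linarith)
  have key : ∀ h : ℝ, 0 < h → ∀ j : ℕ,
      ‖1 / ((j : ℝ) + 1) * (D h (j + 1) - g ((j + 1 : ℕ) * h))‖ ≤
        Real.sqrt (2 * C * B) * h ^ ((1 - β) / 2) * ((j : ℝ) + 1) ^ (-(1 + β / 2)) := by
    intro h hh j
    set J : ℝ := (j : ℝ) + 1 with hJ
    have hJ0 : 0 < J := by positivity
    set t := |D h (j + 1) - g ((j + 1 : ℕ) * h)| with ht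
    have t1 : t ≤ B * h := hDg h hh (j + 1)
    have t2 : t ≤ 2 * C * (h ^ (-β) * J ^ (-β)) := by
      have a1 := (hDb h hh (j + 1)).trans (mul_le_mul_of_nonneg_left (decay_rpow_le hh hβ j) hC)
      have a2 := (hgb h hh (j + 1)).trans (mul_le_mul_of_nonneg_left (decay_rpow_le hh hβ j) hC)
      have := abs_sub (D h (j + 1)) (g ((j + 1 : ℕ) * h))
      linarith
    have t3 : t ≤ Real.sqrt (2 * C * B) * (h ^ ((1 - β) / 2) * J ^ (-(β / 2))) := by
      have hr : 0 ≤ Real.sqrt (2 * C * B) * (h ^ ((1 - β) / 2) * J ^ (-(β / 2))) := by positivity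
      refine abs_le_of_sq_le_sq' ?_ hr |>.2
      rw [mul_pow, mul_pow, Real.sq_sqrt (by positivity), ← Real.rpow_mul_natCast hh.le,
        ← Real.rpow_mul_natCast hJ0.le]
      have e1 : (1 - β) / 2 * ((2 : ℕ) : ℝ) = 1 + -β := by push_cast; ring
      have e2 : -(β / 2) * ((2 : ℕ) : ℝ) = -β := by push_cast; ring
      rw [e1, e2, Real.rpow_add hh, Real.rpow_one]
      calc t ^ 2 = t * t := sq t
        _ ≤ (B * h) * (2 * C * (h ^ (-β) * J ^ (-β))) :=
          mul_le_mul t1 t2 (abs_nonneg _) (by positivity)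
        _ = _ := by ring
    rw [norm_mul, Real.norm_eq_abs, Real.norm_eq_abs, abs_of_pos (by positivity), ← inv_mul_rpow]
    calc 1 / J * t ≤ 1 / J * (Real.sqrt (2 * C * B) * (h ^ ((1 - β) / 2) * J ^ (-(β / 2)))) := by
          gcongr
      _ = _ := by rw [hJ]; ring
  refine squeeze_zero_norm' (a := fun h : ℝ => Real.sqrt (2 * C * B) * h ^ ((1 - β) / 2) *
    ∑' j : ℕ, ((j : ℝ) + 1) ^ (-(1 + β / 2))) ?_ ?_
  · filter_upwards [eventually_mem_nhdsWithin] with h hh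
    rw [← tsum_mul_left]
    exact tsum_of_norm_bounded (hS.mul_left _).hasSum (key h hh)
  · have h1 : ContinuousAt (fun h : ℝ => h ^ ((1 - β) / 2)) 0 :=
      Real.continuousAt_rpow_const 0 _ (Or.inr (by linarith))
    have h2 := h1.tendsto
    rw [Real.zero_rpow (by linarith)] at h2
    have h3 := ((h2.const_mul (Real.sqrt (2 * C * B))).mul_const
      (∑' j : ℕ, ((j : ℝ) + 1) ^ (-(1 + β / 2))))
    simpa using h3.mono_left nhdsWithin_le_nhds

lemma tendsto_harmonic_floor :
    Tendsto (fun h : ℝ => (harmonic ⌊1 / h⌋₊ : ℝ) - Real.log (1 / h)) (nhdsWithin 0 (Ioi 0))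
      (nhds Real.eulerMascheroniConstant) := by
  have h0 : Tendsto (fun h : ℝ => 1 / h) (nhdsWithin 0 (Ioi 0)) atTop := by
    simpa using tendsto_inv_nhdsGT_zero (𝕜 := ℝ)
  have h1 : Tendsto (fun a : ℝ => (harmonic ⌊a⌋₊ : ℝ) - Real.log a) atTop
      (nhds Real.eulerMascheroniConstant) := by
    have a1 := Real.tendsto_harmonic_sub_log.comp (tendsto_nat_floor_atTop (α := ℝ))
    have a2 : Tendsto (fun a : ℝ => Real.log ((⌊a⌋₊ : ℝ) / a)) atTop (nhds (Real.log 1)) :=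
      (Real.continuousAt_log one_ne_zero).tendsto.comp (tendsto_nat_floor_div_atTop (R := ℝ))
    rw [Real.log_one] at a2
    have a3 := a1.add a2
    rw [add_zero] at a3
    refine a3.congr' ?_
    filter_upwards [eventually_ge_atTop 1] with a ha
    have hf : ((⌊a⌋₊ : ℝ)) ≠ 0 := by
      have : 0 < ⌊a⌋₊ := Nat.floor_pos.2 ha
      exact_mod_cast this.ne'
    rw [Real.log_div hf (by linarith)]
    simp only [Function.comp]
    ring
  exact h1.comp h0

lemma hasSum_indicator {h : ℝ} (hh : 0 < h) (G : ℂ) :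
    HasSum (fun j : ℕ => (1 / ((j + 1 : ℕ) : ℂ)) *
      Set.indicator (Set.Icc (0 : ℝ) (1 / h)) (fun _ => G) ((j + 1 : ℕ) : ℝ))
      ((harmonic ⌊1 / h⌋₊ : ℝ) * G) := by
  have h1 : HasSum (fun j : ℕ => (1 / ((j + 1 : ℕ) : ℂ)) *
      Set.indicator (Set.Icc (0 : ℝ) (1 / h)) (fun _ => G) ((j + 1 : ℕ) : ℝ))
      (∑ j ∈ Finset.range ⌊1 / h⌋₊, (1 / ((j + 1 : ℕ) : ℂ)) *
      Set.indicator (Set.Icc (0 : ℝ) (1 / h)) (fun _ => G) ((j + 1 : ℕ) : ℝ)) := by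
    refine hasSum_sum_of_ne_finset_zero fun j hj => ?_
    rw [Finset.mem_range, not_lt] at hj
    rw [Set.indicator_of_notMem, mul_zero]
    rintro ⟨-, h2⟩
    have := (Nat.le_floor h2)
    omega
  refine hasSum_congr' h1 (fun _ => rfl) ?_
  rw [harmonic]
  push_cast
  rw [Finset.sum_mul]
  refine Finset.sum_congr rfl fun j hj => ?_
  rw [Finset.mem_range] at hj
  have : (((j + 1 : ℕ) : ℝ)) ∈ Set.Icc (0 : ℝ) (1 / h) :=
    ⟨by positivity, (Nat.le_floor_iff (by positivity)).1 hj⟩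
  push_cast at this
  rw [Set.indicator_of_mem this, one_div]

end errors

/-! ### Terms of the difference operators and regularity of `f` -/

section terms

/-- The `k`-th term of the fractional difference, for `s = i k c̃` with `k ≠ 0`. The first difference
`u 0 - u 1` is one-sided at the base point, where `D 0` is the derivative itself; this produces the
last correction term. -/
lemma difference_term_eq {s : ℂ} (hs : s.re = 0) (hs0 : s ≠ 0) {h : ℝ} (hh : 0 < h)
    {u D : ℕ → ℝ} {M C : ℝ} (hu : ∀ j, |u j| ≤ M) (hDb : ∀ j, |D j| ≤ C)
    (hD : Summable fun j : ℕ => 1 / ((j : ℝ) + 1) * |D (j + 1)|)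
    (hDu : ∀ j, u (j + 1) - u (j + 2) = h * D (j + 1)) (c : ℂ) :
    -(c * Complex.Gamma s) * (h : ℂ) ^ (s - 1) *
        (∑' j : ℕ, gbinom (1 - s) j * (-1 : ℂ) ^ j * (u j : ℂ)) +
      c * Complex.Gamma s * Complex.cos ((Real.pi : ℂ) / 2 * s) * (D 0 : ℂ) =
    c * (∫ y : ℝ in Ioi 0, (y : ℂ) ^ (s - 1) * (Rker D h y : ℂ)) +
      (D 0 : ℂ) * (c * (Complex.Gamma s * (Complex.cos ((Real.pi : ℂ) / 2 * s) - 1))) +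
      ((D 0 - (u 0 - u 1) / h : ℝ) : ℂ) * (c * ((h : ℂ) ^ s * Complex.Gamma s)) := by
  have hh0 : (h : ℂ) ≠ 0 := by exact_mod_cast hh.ne'
  have hS1 : Summable fun j : ℕ => Gam s (j + 1) * (D (j + 1) : ℂ) := by
    refine Summable.of_norm_bounded hD fun j => ?_
    rw [norm_mul, Complex.norm_real, Real.norm_eq_abs]
    exact mul_le_mul_of_nonneg_right (norm_Gam_succ_le hs j) (abs_nonneg _)
  have e : ∀ j : ℕ, Gam s (j + 1) * ((u (j + 1) : ℂ) - (u (j + 1 + 1) : ℂ)) =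
      h * (Gam s (j + 1) * (D (j + 1) : ℂ)) := fun j => by
    have h1 : (u (j + 1) : ℂ) - (u (j + 1 + 1) : ℂ) = h * (D (j + 1) : ℂ) := by exact_mod_cast hDu j
    rw [h1]; ring
  have hS : Summable fun j : ℕ => Gam s j * ((u j : ℂ) - (u (j + 1) : ℂ)) := by
    rw [← summable_nat_add_iff 1]
    exact (hS1.mul_left (h : ℂ)).congr fun j => (e j).symm
  have h1 := Gamma_mul_tsum_gbinom hs hs0 (u := fun j => (u j : ℂ)) (M := M)
    (fun j => by rw [Complex.norm_real]; exact hu j) hS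
  rw [hS.tsum_eq_zero_add, tsum_congr e, tsum_mul_left] at h1
  have h2 := integral_cpow_mul_Rker_ne hs hs0 hh hDb hD
  have h3 : Gam s 0 = Complex.Gamma s := by simp [Gam]
  rw [h3] at h1
  rw [h2, Complex.cpow_sub _ _ hh0, Complex.cpow_one]
  push_cast
  calc _ = -c * ((h : ℂ) ^ s / h) * (Complex.Gamma s *
        ∑' j : ℕ, gbinom (1 - s) j * (-1 : ℂ) ^ j * (u j : ℂ)) +
      c * Complex.Gamma s * Complex.cos ((Real.pi : ℂ) / 2 * s) * (D 0 : ℂ) := by ring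
    _ = _ := by
      rw [h1]
      field_simp
      ring

/-- The harmonic form of the second difference operator. -/
lemma harmonic_difference_eq {h : ℝ} (hh : 0 < h) {g : ℝ → ℝ}
    (hg : Summable fun j : ℕ => 1 / ((j : ℝ) + 1) * |g ((j + 1 : ℕ) * h)|) (G : ℝ) :
    ∑' j : ℕ+, (1 / ((j : ℕ) : ℂ)) *
          (Set.indicator (Set.Icc (0 : ℝ) (1 / h)) (fun _ => (G : ℂ)) ((j : ℕ) : ℝ)
            - ((g ((j : ℕ) * h) : ℝ) : ℂ)) =
      ((G * (harmonic ⌊1 / h⌋₊ : ℝ) - ∑' j : ℕ, 1 / ((j : ℝ) + 1) * g ((j + 1 : ℕ) * h) : ℝ) : ℂ) := by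
  rw [tsum_pnat_eq_tsum_succ (f := fun j : ℕ => (1 / (j : ℂ)) *
          (Set.indicator (Set.Icc (0 : ℝ) (1 / h)) (fun _ => (G : ℂ)) (j : ℝ)
            - ((g (j * h) : ℝ) : ℂ)))]
  have h1 := hasSum_indicator hh (G : ℂ)
  have h2 : Summable fun j : ℕ => 1 / ((j : ℝ) + 1) * g ((j + 1 : ℕ) * h) :=
    Summable.of_norm_bounded hg fun j => by
      rw [norm_mul, Real.norm_eq_abs, Real.norm_eq_abs, abs_of_pos (by positivity)]
  have h3 := h1.sub (Complex.hasSum_ofReal.2 h2.hasSum)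
  refine (hasSum_congr' h3 (fun j => ?_) ?_).tsum_eq
  · push_cast; ring
  · push_cast; ring

end terms

section regularity

variable {f f' f'' f''' : ℝ → ℝ}

lemma exists_lipschitz (hder2 : ∀ x, HasDerivAt f' (f'' x) x)
    (hder3 : ∀ x, HasDerivAt f'' (f''' x) x) (hf'''i : Integrable f''') :
    ∃ B, 0 ≤ B ∧ ∀ u v, |f' u - f' v| ≤ B * |u - v| := by
  have hb : ∀ x, |f'' x| ≤ |f'' 0| + ∫ y, |f''' y| := by
    intro x
    have h1 := intervalIntegral.integral_eq_sub_of_hasDerivAt (a := 0) (b := x)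
      (fun y _ => hder3 y) hf'''i.intervalIntegrable
    have h2 : |∫ y in (0 : ℝ)..x, f''' y| ≤ ∫ y, |f''' y| :=
      (intervalIntegral.norm_integral_le_integral_norm_uIoc).trans
        (setIntegral_le_integral hf'''i.norm (Eventually.of_forall fun y => norm_nonneg _))
    have h3 : f'' x = f'' 0 + ∫ y in (0 : ℝ)..x, f''' y := by rw [h1]; ring
    rw [h3]
    exact (abs_add_le _ _).trans (by linarith)
  refine ⟨|f'' 0| + ∫ y, |f''' y|, (abs_nonneg _).trans (hb 0), fun u v => ?_⟩
  exact convex_univ.norm_image_sub_le_of_norm_hasDerivWithin_le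
    (fun x _ => (hder2 x).hasDerivWithinAt) (fun x _ => hb x) (mem_univ v) (mem_univ u)

/-- A difference quotient of `f` equals `f'` at an intermediate point. -/
lemma exists_quotient_eq (hder1 : ∀ x, HasDerivAt f (f' x) x) (x : ℝ) {a h : ℝ} (hh : 0 < h) :
    ∃ ξ, a ≤ ξ ∧ ξ ≤ a + h ∧ f (x - a) - f (x - (a + h)) = h * f' (x - ξ) := by
  obtain ⟨η, hη, he⟩ := exists_hasDerivAt_eq_slope f f' (a := x - (a + h)) (b := x - a) (by linarith)
    (fun y _ => (hder1 y).continuousAt.continuousWithinAt) (fun y _ => hder1 y)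
  refine ⟨x - η, by linarith [hη.2], by linarith [hη.1], ?_⟩
  rw [sub_sub_cancel, he]
  have : x - a - (x - (a + h)) = h := by ring
  rw [this]
  field_simp

/-- Landau-type inequality: a bounded function with Lipschitz derivative has bounded derivative. -/
lemma exists_deriv_bound (hder1 : ∀ x, HasDerivAt f (f' x) x) {B : ℝ} (hB : 0 ≤ B)
    (hlip : ∀ u v, |f' u - f' v| ≤ B * |u - v|) (hfb : ∃ M : ℝ, ∀ y, |f y| ≤ M) :
    ∃ A, 0 ≤ A ∧ ∀ y, |f' y| ≤ A := by
  obtain ⟨M, hM⟩ := hfb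
  have hM0 : 0 ≤ M := (abs_nonneg _).trans (hM 0)
  refine ⟨2 * M + B, by positivity, fun y => ?_⟩
  obtain ⟨ξ, h0, h1, h2⟩ := exists_quotient_eq hder1 y (a := 0) (h := 1) one_pos
  rw [one_mul] at h2
  have h3 : |f' (y - ξ)| ≤ 2 * M := by
    rw [← h2]
    exact (abs_sub _ _).trans (by linarith [hM (y - 0), hM (y - (0 + 1))])
  have h4 : |f' y - f' (y - ξ)| ≤ B * 1 := by
    refine (hlip _ _).trans (mul_le_mul_of_nonneg_left ?_ hB)
    rw [sub_sub_cancel, abs_of_nonneg h0]; linarith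
  have := abs_sub_abs_le_abs_sub (f' y) (f' (y - ξ))
  linarith

/-- The decay of `f'` at `-∞`, recentred at `x` and with the exponent lowered to at most `1/2`. -/
lemma exists_decay {A β : ℝ} (hA : 0 ≤ A) (hfA : ∀ y, |f' y| ≤ A) (hβ : 0 < β)
    (hdecay : f' =O[atBot] fun y : ℝ => |y| ^ (-β)) (x : ℝ) :
    ∃ C, 0 ≤ C ∧ ∀ v, 0 ≤ v → |f' (x - v)| ≤ C * (1 + v) ^ (-min β (1 / 2)) := by
  set γ := min β (1 / 2) with hγ
  have hγ0 : 0 < γ := lt_min hβ (by norm_num)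
  obtain ⟨K, hK0, hK⟩ := hdecay.exists_pos
  obtain ⟨a, ha⟩ := eventually_atBot.1 hK.bound
  set N := max 0 (max (x - a) (1 + 2 * x)) with hN
  have hN0 : 0 ≤ N := le_max_left _ _
  refine ⟨A * (1 + N) ^ γ + K * 2 ^ β, by positivity, fun v hv => ?_⟩
  have hv1 : 0 < 1 + v := by linarith
  have hpos : 0 < (1 + v) ^ (-γ) := Real.rpow_pos_of_pos hv1 _
  rw [add_mul]
  rcases le_total v N with h | h
  · have : 1 ≤ (1 + N) ^ γ * (1 + v) ^ (-γ) := by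
      rw [Real.rpow_neg hv1.le, ← div_eq_mul_inv, one_le_div (Real.rpow_pos_of_pos hv1 _)]
      exact Real.rpow_le_rpow hv1.le (by linarith) hγ0.le
    have h2 : 0 ≤ K * 2 ^ β * (1 + v) ^ (-γ) := by positivity
    have h3 := mul_le_mul_of_nonneg_left this hA
    nlinarith [hfA (x - v)]
  · have h1 : x - a ≤ v := ((le_max_left _ _).trans (le_max_right _ _)).trans h
    have h2 : 1 + 2 * x ≤ v := ((le_max_right _ _).trans (le_max_right _ _)).trans h
    have h3 := ha (x - v) (by linarith)
    rw [Real.norm_eq_abs, Real.norm_of_nonneg (by positivity)] at h3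
    have h4 : |x - v| ^ (-β) ≤ ((1 + v) / 2) ^ (-β) := by
      refine Real.rpow_le_rpow_of_nonpos (by positivity) ?_ (by linarith)
      rw [abs_sub_comm]
      exact le_trans (by linarith) (le_abs_self _)
    have h5 : ((1 + v) / 2) ^ (-β) = 2 ^ β * (1 + v) ^ (-β) := by
      rw [Real.div_rpow hv1.le (by norm_num), Real.rpow_neg (by norm_num : (0 : ℝ) ≤ 2)]
      field_simp
    have h6 : (1 + v) ^ (-β) ≤ (1 + v) ^ (-γ) :=
      Real.rpow_le_rpow_of_exponent_le (by linarith) (neg_le_neg (min_le_left _ _))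
    have h7 : 0 ≤ A * (1 + N) ^ γ * (1 + v) ^ (-γ) := by positivity
    calc |f' (x - v)| ≤ K * (2 ^ β * (1 + v) ^ (-γ)) := by
          refine h3.trans (mul_le_mul_of_nonneg_left ?_ hK0.le)
          rw [h5] at h4
          exact h4.trans (by gcongr)
      _ ≤ _ := by linarith

end regularity

/-! ### Summation over the Fourier modes -/

section assembly

variable {b : ℝ} {θ : ℝ → ℝ} {cfs : ℤ → ℂ}

/-- The series `∑_{k ≠ 0} c_k h^{s_k} Γ(s_k)`, the factor of `f' x - (f x - f (x - h)) / h` in the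
fractional difference. -/
def Efac (b : ℝ) (cfs : ℤ → ℂ) (h : ℝ) : ℂ :=
  ∑' k : ℤ, if k = 0 then 0 else cfs k * ((h : ℂ) ^ sk b k * Complex.Gamma (sk b k))

lemma norm_Efac_term_le {C₁ h : ℝ} (hC₁ : 0 ≤ C₁)
    (hΓ : ∀ k : ℤ, k ≠ 0 → ‖Complex.Gamma (sk b k)‖ ≤ C₁) (hh : 0 < h) (k : ℤ) :
    ‖(if k = 0 then 0 else cfs k * ((h : ℂ) ^ sk b k * Complex.Gamma (sk b k)) : ℂ)‖ ≤
      ‖cfs k‖ * C₁ := by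
  split_ifs with hk
  · rw [norm_zero]; positivity
  · rw [norm_mul, norm_mul, norm_cpow_im (sk_re b k) hh, one_mul]
    exact mul_le_mul_of_nonneg_left (hΓ k hk) (norm_nonneg _)

/-- The fractional difference as the integral of `θ (log y) / y` against `Rker`, up to correction
terms. The integral involves the full Fourier series of `θ`, so its `k = 0` term, which is absent
from the fractional difference, is subtracted. -/
lemma hasSum_difference (hb : 0 < b) (hs : Summable fun k => ‖cfs k‖)
    (hθ : ∀ x : ℝ, HasSum (fun k : ℤ => cfs k * cexp (sk b k * x)) (θ x : ℂ))
    {κ : ℝ} (hκ : HasSum (fun k : ℤ => cfs k * Wk b k) (κ : ℂ))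
    {C₁ : ℝ} (hC₁ : 0 ≤ C₁) (hΓ : ∀ k : ℤ, k ≠ 0 → ‖Complex.Gamma (sk b k)‖ ≤ C₁)
    {h : ℝ} (hh : 0 < h) {u D : ℕ → ℝ} {M C : ℝ} (hu : ∀ j, |u j| ≤ M) (hDb : ∀ j, |D j| ≤ C)
    (hD : Summable fun j : ℕ => 1 / ((j : ℝ) + 1) * |D (j + 1)|)
    (hDu : ∀ j, u (j + 1) - u (j + 2) = h * D (j + 1))
    (hR : IntegrableOn (fun y => y⁻¹ * Rker D h y) (Ioi 0)) :
    HasSum (fun k : ℤ => (if k = 0 then 0 else -(cfs k * Complex.Gamma (sk b k))) *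
        (h : ℂ) ^ (sk b k - 1) *
        (∑' j : ℕ, gbinom (1 - sk b k) j * (-1 : ℂ) ^ j * (u j : ℂ)) +
      (if k = 0 then 0 else cfs k * Complex.Gamma (sk b k) *
        Complex.cos ((Real.pi : ℂ) / 2 * sk b k)) * (D 0 : ℂ))
      (((∫ y in Ioi 0, θ (Real.log y) / y * Rker D h y : ℝ) : ℂ) + D 0 * κ +
        ((D 0 - (u 0 - u 1) / h : ℝ) : ℂ) * Efac b cfs h -
        cfs 0 * ((D 0 * Real.log (1 / h) - ∑' j : ℕ, 1 / ((j : ℝ) + 1) * D (j + 1) : ℝ) : ℂ)) := by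
  have h1 := hasSum_theta_integral_real hs hθ hR
  have h3 : HasSum (fun k : ℤ => (if k = 0 then 0 else
      cfs k * ((h : ℂ) ^ sk b k * Complex.Gamma (sk b k)) : ℂ)) (Efac b cfs h) :=
    (Summable.of_norm_bounded (hs.mul_right C₁) (norm_Efac_term_le hC₁ hΓ hh)).hasSum
  have h4 := hasSum_ite_eq (0 : ℤ)
    (cfs 0 * ((D 0 * Real.log (1 / h) - ∑' j : ℕ, 1 / ((j : ℝ) + 1) * D (j + 1) : ℝ) : ℂ))
  refine hasSum_congr' (((h1.add (hκ.mul_left (D 0 : ℂ))).add (h3.mul_left _)).sub h4)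
    (fun k => ?_) rfl
  by_cases hk : k = 0
  · subst hk
    simp only [if_true, Wk, sk_zero, integral_cpow_mul_Rker_zero hh hDb hD]
    ring
  · simp only [if_neg hk, Wk]
    rw [difference_term_eq (sk_re b k) (sk_ne_zero hb hk) hh hu hDb hD hDu]
    ring

end assembly

/-! ### The limit formula -/

theorem stmt18 (c : ℝ) (hc : 1 < c)
    (θ : ℝ → ℝ) (cfs : ℤ → ℂ) (hθ : IsSmoothAdmissible c 1 θ cfs)
    (ctil : ℝ) (hctil : ctil = 2 * Real.pi / Real.log c)
    (φ₁ : Measure ℝ)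
    (hφ : ∀ r : ℝ, 0 < r → φ₁ (Set.Ioi r) = ENNReal.ofReal (r ^ (-1 : ℝ) * θ (Real.log r)))
    (hφ0 : φ₁ (Set.Iic 0) = 0)
    (ω₁ ω₂ : ℤ → ℂ)
    (hω₁ : ∀ k : ℤ, ω₁ k =
      if k = 0 then 0 else -(cfs k * Complex.Gamma (Complex.I * (k : ℂ) * (ctil : ℂ))))
    (hω₂ : ∀ k : ℤ, ω₂ k = if k = 0 then 0 else
      cfs k * Complex.Gamma (Complex.I * (k : ℂ) * (ctil : ℂ)) *
        Complex.cos ((Real.pi : ℂ) / 2 * (Complex.I * (k : ℂ) * (ctil : ℂ))))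
    (f f' f'' f''' : ℝ → ℝ)
    (hder1 : ∀ x, HasDerivAt f (f' x) x) (hder2 : ∀ x, HasDerivAt f' (f'' x) x)
    (hder3 : ∀ x, HasDerivAt f'' (f''' x) x)
    (hfb : ∃ M : ℝ, ∀ y, |f y| ≤ M) (hfi : Integrable f) (hf'''i : Integrable f''')
    (β : ℝ) (hβ : 0 < β)
    (hdecay : f' =O[atBot] fun y : ℝ => |y| ^ (-β))
    (Δ₁ Δ₂ : ℝ → ℝ → ℂ)
    (hΔ₁ : ∀ h > (0 : ℝ), ∀ x : ℝ, Δ₁ h x =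
      ∑' k : ℤ, (ω₁ k * ((h : ℂ)) ^ (Complex.I * (k : ℂ) * (ctil : ℂ) - 1) *
        (∑' j : ℕ, gbinom ((1 : ℂ) - Complex.I * (k : ℂ) * (ctil : ℂ)) j * (-1 : ℂ) ^ j *
          ((f (x - j * h) : ℝ) : ℂ)) + ω₂ k * ((f' x : ℝ) : ℂ)))
    (hΔ₂ : ∀ h > (0 : ℝ), ∀ x : ℝ, Δ₂ h x =
      -cfs 0 * (Real.eulerMascheroniConstant : ℂ) * ((f' x : ℝ) : ℂ) +
        cfs 0 * ∑' j : ℕ+, (1 / ((j : ℕ) : ℂ)) *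
          (Set.indicator (Set.Icc (0 : ℝ) (1 / h)) (fun _ => ((f' x : ℝ) : ℂ)) ((j : ℕ) : ℝ)
            - ((f' (x - (j : ℕ) * h) : ℝ) : ℂ))) :
    ∀ᵐ x : ℝ, Tendsto (fun h : ℝ => Δ₁ h x + Δ₂ h x) (nhdsWithin 0 (Set.Ioi 0))
      (nhds (((∫ y, (f (x - y) - f x + f' x * Real.sin y) ∂φ₁ : ℝ)) : ℂ)) := by
  obtain ⟨⟨hpos, -, -⟩, hcont, -, -, hs, hθ'⟩ := hθ
  have hb : 0 < ctil := by
    rw [hctil]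
    have := Real.log_pos hc
    positivity
  have hθ : ∀ x : ℝ, HasSum (fun k : ℤ => cfs k * cexp (sk ctil k * x)) (θ x : ℂ) := by
    intro x
    have := hθ' x
    rw [mul_one, ← hctil] at this
    exact this
  obtain ⟨B, hB, hlip⟩ := exists_lipschitz hder2 hder3 hf'''i
  obtain ⟨A, hA, hfA⟩ := exists_deriv_bound hder1 hB hlip hfb
  obtain ⟨M, hM⟩ := hfb
  obtain ⟨C₁, hC₁, hΓ, -⟩ := exists_Vk_bound hb
  obtain ⟨hFi, hκ⟩ := hasSum_compensator hb hs hcont hθ hpos hφ hφ0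
  have hf'c : Continuous f' := continuous_iff_continuousAt.2 fun y => (hder2 y).continuousAt
  set κ : ℝ := ∫ y, Feps 0 y ∂φ₁ with hκdef
  refine Eventually.of_forall fun x => ?_
  obtain ⟨C, hC, hdec⟩ := exists_decay hA hfA hβ hdecay x
  -- the decay exponent is capped at `1 / 2`, as `tendsto_quotient_error` requires
  set γ := min β (1 / 2) with hγ
  have hγ0 : 0 < γ := lt_min hβ (by norm_num)
  have hγ1 : γ ≤ 1 / 2 := min_le_right _ _
  set g : ℝ → ℝ := fun v => f' (x - v) with hg
  have hg0 : g 0 = f' x := by simp [hg]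
  -- the difference quotient at distance `j h`, with the derivative in place of the one at `0`
  set D : ℝ → ℕ → ℝ := fun h j =>
    if j = 0 then f' x else (f (x - j * h) - f (x - (j + 1) * h)) / h with hDdef
  have hD0 : ∀ h, D h 0 = f' x := fun h => by simp [hDdef]
  -- every `D h j` is a value of `g` on the interval `[j h, (j + 1) h]`
  have hDξ : ∀ h > (0 : ℝ), ∀ j : ℕ, ∃ ξ : ℝ,
      j * h ≤ ξ ∧ ξ ≤ j * h + h ∧ D h j = g ξ ∧ (j = 0 → ξ = 0) := by
    intro h hh j
    by_cases hj : j = 0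
    · subst hj
      exact ⟨0, by simp, by simpa using le_of_lt (show 0 < h from hh), by rw [hD0, hg0], fun _ => rfl⟩
    · obtain ⟨ξ, h0, h1, h2⟩ := exists_quotient_eq hder1 x (a := j * h) (h := h) hh
      refine ⟨ξ, h0, h1, ?_, fun h => absurd h hj⟩
      have e : (j : ℝ) * h + h = (j + 1) * h := by ring
      have hne : h ≠ 0 := ne_of_gt hh
      simp only [hDdef, if_neg hj]
      rw [← e, h2, mul_div_cancel_left₀ _ hne]
  have hjh : ∀ h > (0 : ℝ), ∀ j : ℕ, 0 ≤ j * h := fun h hh j => by positivity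
  have hglip : ∀ u v, |g u - g v| ≤ B * |u - v| := fun u v => by
    have := hlip (x - u) (x - v)
    rwa [sub_sub_sub_cancel_left, abs_sub_comm v u] at this
  have hDb : ∀ h > 0, ∀ j : ℕ, |D h j| ≤ C * (1 + j * h) ^ (-γ) := by
    intro h hh j
    obtain ⟨ξ, h0, h1, h2, -⟩ := hDξ h hh j
    have hj := hjh h hh j
    rw [h2]
    refine (hdec ξ (hj.trans h0)).trans (mul_le_mul_of_nonneg_left ?_ hC)
    exact Real.rpow_le_rpow_of_nonpos (by positivity) (by linarith) (by linarith)
  have hgb : ∀ h > 0, ∀ j : ℕ, |g (j * h)| ≤ C * (1 + j * h) ^ (-γ) := fun h hh j =>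
    hdec _ (hjh h hh j)
  have hDg : ∀ h > 0, ∀ j : ℕ, |D h j - g (j * h)| ≤ B * h := by
    intro h hh j
    obtain ⟨ξ, h0, h1, h2, -⟩ := hDξ h hh j
    rw [h2]
    refine (hglip _ _).trans (mul_le_mul_of_nonneg_left ?_ hB)
    rw [abs_of_nonneg (by linarith)]; linarith
  have hDL : ∀ h > 0, ∀ j : ℕ, |D h j - D h 0| ≤ (2 * B) * (j * h) := by
    intro h hh j
    obtain ⟨ξ, h0, h1, h2, h3⟩ := hDξ h hh j
    have hj := hjh h hh j
    rw [h2, hD0, ← hg0, mul_comm 2 B, mul_assoc]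
    refine (hglip _ _).trans (mul_le_mul_of_nonneg_left ?_ hB)
    rw [sub_zero, abs_of_nonneg (hj.trans h0)]
    by_cases hj0 : j = 0
    · rw [h3 hj0]; positivity
    · have : (1 : ℝ) ≤ j := by exact_mod_cast Nat.one_le_iff_ne_zero.2 hj0
      nlinarith [mul_le_mul_of_nonneg_right this (le_of_lt hh)]
  have hDC : ∀ h > 0, ∀ j : ℕ, |D h j| ≤ A := by
    intro h hh j
    obtain ⟨ξ, h0, h1, h2, -⟩ := hDξ h hh j
    rw [h2]; exact hfA _
  have hDs := fun h (hh : h > 0) => summable_of_decay hh hγ0 hC (hDb h hh)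
  have hgs := fun h (hh : h > 0) =>
    summable_of_decay (v := fun j : ℕ => g (j * h)) hh hγ0 hC (hgb h hh)
  obtain ⟨hlimi, hlim⟩ := tendsto_integral_Rker hs hcont hθ hγ0 (by linarith) hC hDb
    (fun h _ => (hD0 h).trans hg0.symm) hDL hDg hglip (by fun_prop)
  set G₀ : ℝ → ℝ := fun h => (f x - f (x - h)) / h with hG₀
  set err : ℝ → ℝ := fun h =>
    ∑' j : ℕ, 1 / ((j : ℝ) + 1) * (D h (j + 1) - g ((j + 1 : ℕ) * h)) with herr
  set harm : ℝ → ℝ := fun h => (harmonic ⌊1 / h⌋₊ : ℝ) - Real.log (1 / h) with hharm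
  -- exact formula for the difference operators
  have hform : ∀ h : ℝ, 0 < h ∧ h ≤ 1 → Δ₁ h x + Δ₂ h x =
      ((∫ y in Ioi 0, θ (Real.log y) / y * Rker (D h) h y : ℝ) : ℂ) + ((f' x * κ : ℝ) : ℂ) +
        ((f' x - G₀ h : ℝ) : ℂ) * Efac ctil cfs h +
        cfs 0 * ((f' x * (harm h - Real.eulerMascheroniConstant) + err h : ℝ) : ℂ) := by
    rintro h ⟨hh, hh1⟩
    have hR := integrableOn_Rker hγ0 (by linarith) hC (hDb h hh) (hDL h hh) hh hh1
    have H1 := hasSum_difference hb hs hθ hκ hC₁ hΓ hh (u := fun j : ℕ => f (x - j * h)) (D := D h)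
      (fun j => hM _) (hDC h hh) (hDs h hh) (fun j => by
        simp only [hDdef, if_neg j.succ_ne_zero]
        push_cast
        have e : (j : ℝ) + 1 + 1 = j + 2 := by ring
        rw [e]
        field_simp) hR
    rw [hD0] at H1
    have H2 := (hΔ₁ h hh x).trans ((tsum_congr fun k => by rw [hω₁, hω₂]; rfl).trans H1.tsum_eq)
    have H3 := (hΔ₂ h hh x).trans (congrArg (fun z => -cfs 0 *
      (Real.eulerMascheroniConstant : ℂ) * ((f' x : ℝ) : ℂ) + cfs 0 * z)
      (harmonic_difference_eq hh (hgs h hh) (f' x)))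
    have H4 : err h = ∑' j : ℕ, 1 / ((j : ℝ) + 1) * D h (j + 1) -
        ∑' j : ℕ, 1 / ((j : ℝ) + 1) * g ((j + 1 : ℕ) * h) := by
      have s1 : Summable fun j : ℕ => 1 / ((j : ℝ) + 1) * D h (j + 1) :=
        Summable.of_norm_bounded (hDs h hh) fun j => by
          rw [norm_mul, Real.norm_eq_abs, Real.norm_eq_abs, abs_of_pos (by positivity)]
      have s2 : Summable fun j : ℕ => 1 / ((j : ℝ) + 1) * g ((j + 1 : ℕ) * h) :=
        Summable.of_norm_bounded (hgs h hh) fun j => by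
          rw [norm_mul, Real.norm_eq_abs, Real.norm_eq_abs, abs_of_pos (by positivity)]
      rw [← s1.tsum_sub s2]
      exact tsum_congr fun j => by ring
    have e0 : (f (x - (0 : ℕ) * h) - f (x - (1 : ℕ) * h)) / h = G₀ h := by simp [hG₀]
    rw [H2, H3, H4, e0]
    simp only [hharm]
    push_cast
    ring
  have hsmall : ∀ᶠ h : ℝ in nhdsWithin 0 (Ioi 0), 0 < h ∧ h ≤ 1 :=
    (eventually_mem_nhdsWithin).and
      (nhdsWithin_le_nhds (eventually_le_nhds (zero_lt_one)))
  have hid0 : Tendsto (fun h : ℝ => h) (nhdsWithin 0 (Ioi 0)) (nhds 0) :=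
    tendsto_id.mono_left nhdsWithin_le_nhds
  have T3 : Tendsto (fun h => ((f' x - G₀ h : ℝ) : ℂ) * Efac ctil cfs h) (nhdsWithin 0 (Ioi 0))
      (nhds 0) := by
    refine squeeze_zero_norm' (a := fun h => B * h * ∑' k, ‖cfs k‖ * C₁) ?_ ?_
    · filter_upwards [hsmall] with h hh
      rw [norm_mul, Complex.norm_real, Real.norm_eq_abs]
      refine mul_le_mul ?_ (tsum_of_norm_bounded (hs.mul_right C₁).hasSum
        (norm_Efac_term_le hC₁ hΓ hh.1)) (norm_nonneg _) (mul_nonneg hB hh.1.le)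
      obtain ⟨ξ, h0, h1, h2⟩ := exists_quotient_eq hder1 x (a := 0) (h := h) hh.1
      have e : G₀ h = g ξ := by
        simp only [hG₀, hg]
        rw [sub_zero, zero_add] at h2
        rw [h2]
        field_simp [hh.1.ne']
      rw [e, ← hg0]
      refine (hglip _ _).trans (mul_le_mul_of_nonneg_left ?_ hB)
      rw [zero_sub, abs_neg, abs_of_nonneg h0]; linarith
    · simpa using (hid0.const_mul B).mul_const (∑' k, ‖cfs k‖ * C₁)
  have T4 : Tendsto (fun h => cfs 0 *
      ((f' x * (harm h - Real.eulerMascheroniConstant) + err h : ℝ) : ℂ)) (nhdsWithin 0 (Ioi 0))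
      (nhds 0) := by
    have t1 := (tendsto_harmonic_floor.sub_const Real.eulerMascheroniConstant).const_mul (f' x)
    have t2 := t1.add (tendsto_quotient_error hγ0 hγ1 hC hB hDb hgb hDg)
    rw [sub_self, mul_zero, add_zero] at t2
    have t3 := ((Complex.continuous_ofReal.tendsto 0).comp t2).const_mul (cfs 0)
    rw [Complex.ofReal_zero, mul_zero] at t3
    exact t3
  have T1 := (Complex.continuous_ofReal.tendsto _).comp hlim
  have T := (((T1.add (tendsto_const_nhds (x := ((f' x * κ : ℝ) : ℂ)))).add T3).add T4).congr'
    (hsmall.mono fun h hh => (hform h hh).symm)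
  -- identification of the limit with the integral against `φ₁`
  have hFd : ∀ y, HasDerivAt (fun y => f (x - y) - f x + f' x * (1 - Real.exp (-y)))
      (g 0 * Real.exp (-y) - g y) y := by
    intro y
    have h1 : HasDerivAt (fun y => f (x - y)) (f' (x - y) * -1) y :=
      (hder1 (x - y)).comp y ((hasDerivAt_id y).const_sub x)
    have h3 : HasDerivAt (fun y : ℝ => Real.exp (-y)) (Real.exp (-y) * -1) y :=
      ((hasDerivAt_id y).neg).exp
    refine ((h1.sub_const (f x)).add ((h3.const_sub 1).const_mul (f' x))).congr_deriv ?_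
    rw [hg0]
    simp only [hg]
    ring
  obtain ⟨hFint, hFval⟩ := integral_layer hpos hφ hφ0 hFd (by fun_prop) (by simp)
    (integrableOn_theta_mul hs hcont hθ hlimi)
  have hval : ∫ y, (f (x - y) - f x + f' x * Real.sin y) ∂φ₁ =
      (∫ y in Ioi 0, θ (Real.log y) / y * (g 0 * Real.exp (-y) - g y)) + f' x * κ := by
    rw [← hFval, hκdef, ← integral_const_mul, ← integral_add hFint (hFi.const_mul _)]
    refine integral_congr_ae (Eventually.of_forall fun y => ?_)
    simp [Feps]
    ring
  rw [hval, Complex.ofReal_add]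
  simpa using T
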